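/- arXiv:1410.3997 — 2 statements merged into one kernel-verified Lean document; each statement's English description precedes it below -/
import Mathlib

section
/- Let f : A → A be an area preserving reversible homeomorphism of the closed annulus A. Then either f has no periodic point at all (there is no z ∈ A and integer k ≥ 1 with f^k(z) = z), or the set of interior symmetric periodic points of f (points z in the interior Å = {z : 1 < |z| < 2} with f^k(z) = z and f^ℓ(z) = I(z) for some integers k, ℓ ≥ 1) is infinite. -/
open MeasureTheory Set

noncomputable section

/-- The reflection `I(x,y) = (-x,y)` on the plane. -/
def refl2 : ℝ × ℝ → ℝ × ℝ := fun p => (-p.1, p.2)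

/-- The Euclidean norm `|z| = √(x² + y²)` on `ℝ²`. -/
def enorm2 (p : ℝ × ℝ) : ℝ := Real.sqrt (p.1 ^ 2 + p.2 ^ 2)

/-- The closed annulus `A = {z : 1 ≤ |z| ≤ 2}`. -/
def annulus : Set (ℝ × ℝ) := {p | 1 ≤ enorm2 p ∧ enorm2 p ≤ 2}

/-- The open annulus `Å = {z : 1 < |z| < 2}`, the interior of `A`. -/
def annulusInt : Set (ℝ × ℝ) := {p | 1 < enorm2 p ∧ enorm2 p < 2}

lemma enorm2_refl2 (p : ℝ × ℝ) : enorm2 (refl2 p) = enorm2 p := by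
  simp [enorm2, refl2, neg_sq]

lemma refl2_mem_annulus {p : ℝ × ℝ} (h : p ∈ annulus) : refl2 p ∈ annulus := by
  simpa [annulus, enorm2_refl2] using h

/-- The restriction `I_A` of the reflection to the closed annulus. -/
def IA : annulus → annulus := fun z => ⟨refl2 z, refl2_mem_annulus z.2⟩

open Filter Topology

/-! ### The strip covering the annulus -/

/-- The strip `ℝ × [1, 2]`, the universal cover of the closed annulus. -/
abbrev Strip : Type := ℝ × Icc (1 : ℝ) 2

namespace Strip

/-- The reflection `(x, r) ↦ (-x, r)` of the strip. -/
def mirror : Strip ≃ₜ Strip := (Homeomorph.neg ℝ).prodCongr (Homeomorph.refl _)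

@[simp] lemma mirror_apply (u : Strip) : mirror u = (-u.1, u.2) := rfl

/-- The parametrisation of the axis `{0} × [1, 2]` of the strip, constant outside `[1, 2]`. -/
def axis (y : ℝ) : Strip := (0, projIcc 1 2 one_le_two y)

@[simp] lemma axis_fst (y : ℝ) : (axis y).1 = 0 := rfl

lemma continuous_axis : Continuous axis := by unfold axis; fun_prop

@[simp] lemma mirror_axis (y : ℝ) : mirror (axis y) = axis y := by simp [axis]

lemma axis_snd (u : Strip) (hu : u.1 = 0) : axis u.2 = u := by
  ext <;> simp [axis, hu]

lemma axis_snd_coe {y : ℝ} (hy : y ∈ Icc (1 : ℝ) 2) : ((axis y).2 : ℝ) = y := by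
  simp [axis, projIcc_of_mem _ hy]

/-- A homeomorphism of the strip is reversible if the reflection conjugates it to its inverse. -/
def Reversible (G : Strip ≃ₜ Strip) : Prop := mirror * G * mirror = G⁻¹

lemma mirror_mul_mirror : mirror * mirror = 1 := by
  ext u <;> simp

lemma mirror_inv : mirror⁻¹ = mirror := inv_eq_of_mul_eq_one_left mirror_mul_mirror

lemma Reversible.pow {G : Strip ≃ₜ Strip} (hG : Reversible G) (n : ℕ) : Reversible (G ^ n) := by
  have h : mirror * G ^ n * mirror⁻¹ = (mirror * G * mirror⁻¹) ^ n := (conj_pow ..).symm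
  rw [mirror_inv, hG, inv_pow] at h
  exact h

lemma Reversible.inv {G : Strip ≃ₜ Strip} (hG : Reversible G) : Reversible G⁻¹ := by
  have h : mirror * G * mirror⁻¹ = G⁻¹ := by rw [mirror_inv]; exact hG
  have h' := congrArg (·⁻¹) h
  simp only [mul_inv_rev, inv_inv, ← mul_assoc, mirror_inv] at h'
  simpa [Reversible] using h'

lemma Reversible.inv_axis {G : Strip ≃ₜ Strip} (hG : Reversible G) (y : ℝ) :
    G⁻¹ (axis y) = mirror (G (axis y)) := by
  rw [← show mirror * G * mirror = G⁻¹ from hG, Homeomorph.mul_apply, Homeomorph.mul_apply,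
    mirror_axis]

lemma Reversible.inv_axis_fst {G : Strip ≃ₜ Strip} (hG : Reversible G) (y : ℝ) :
    (G⁻¹ (axis y)).1 = -(G (axis y)).1 := by
  rw [hG.inv_axis, mirror_apply]

lemma inv_apply_self (G : Strip ≃ₜ Strip) (u : Strip) : G⁻¹ (G u) = u := G.symm_apply_apply u

lemma apply_inv_self (G : Strip ≃ₜ Strip) (u : Strip) : G (G⁻¹ u) = u := G.apply_symm_apply u

lemma Reversible.inv_pow_axis_fst {G : Strip ≃ₜ Strip} (hG : Reversible G) (n : ℕ) (y : ℝ) :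
    ((G⁻¹ ^ n) (axis y)).1 = -((G ^ n) (axis y)).1 := by
  rw [inv_pow, (hG.pow n).inv_axis_fst]

/-! ### Signs of continuous functions on connected sets -/

lemma _root_.IsPreconnected.pos_of_ne_zero {X : Type*} [TopologicalSpace X] {s : Set X}
    (hs : IsPreconnected s) {φ : X → ℝ} (hφ : ContinuousOn φ s) (h0 : ∀ u ∈ s, φ u ≠ 0)
    {u v : X} (hu : u ∈ s) (hv : v ∈ s) (hpos : 0 < φ u) : 0 < φ v := by
  by_contra! h
  obtain ⟨w, hw, hw0⟩ := hs.intermediate_value hv hu hφ ⟨h, hpos.le⟩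
  exact h0 w hw hw0

lemma _root_.IsPreconnected.neg_of_ne_zero {X : Type*} [TopologicalSpace X] {s : Set X}
    (hs : IsPreconnected s) {φ : X → ℝ} (hφ : ContinuousOn φ s) (h0 : ∀ u ∈ s, φ u ≠ 0)
    {u v : X} (hu : u ∈ s) (hv : v ∈ s) (hneg : φ u < 0) : φ v < 0 := by
  have := hs.pos_of_ne_zero hφ.neg (fun w hw ↦ neg_ne_zero.2 (h0 w hw)) hu hv (neg_pos.2 hneg)
  exact neg_pos.1 this

lemma isPreconnected_ball_inter_pos {c : Strip} (hc : c.1 = 0) (η : ℝ) :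
    IsPreconnected (Metric.ball c η ∩ {u | 0 < u.1}) := by
  have h : Metric.ball c η ∩ {u | 0 < u.1} = Ioo 0 η ×ˢ Metric.ball c.2 η := by
    ext u
    simp only [mem_inter_iff, mem_prod, Metric.mem_ball, Prod.dist_eq, max_lt_iff, mem_ofPred_eq,
      mem_Ioo, hc, Real.dist_eq, sub_zero]
    constructor
    · rintro ⟨⟨h1, h2⟩, h3⟩
      exact ⟨⟨h3, (abs_lt.1 h1).2⟩, h2⟩
    · rintro ⟨⟨h1, h2⟩, h3⟩
      exact ⟨⟨by rwa [abs_of_pos h1], h3⟩, h1⟩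
  rw [h]
  refine isPreconnected_Ioo.prod ?_
  rw [← Topology.IsInducing.subtypeVal.isPreconnected_image]
  have : Subtype.val '' Metric.ball c.2 η = Icc 1 2 ∩ Metric.ball (c.2 : ℝ) η := by
    ext y
    simp only [mem_image, Metric.mem_ball, Subtype.exists, mem_inter_iff]
    constructor
    · rintro ⟨a, ha, h, rfl⟩
      exact ⟨ha, h⟩
    · rintro ⟨ha, h⟩
      exact ⟨y, ha, h, rfl⟩
  rw [this, Real.ball_eq_Ioo]
  exact (ordConnected_Icc.inter ordConnected_Ioo).isPreconnected

/-! ### Returns to the axis -/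

/-- The parameters of the points of the axis that come back to the axis. -/
def returns (G : Strip ≃ₜ Strip) : Set ℝ :=
  {y | y ∈ Icc (1 : ℝ) 2 ∧ ∃ n : ℕ, 1 ≤ n ∧ ((G ^ n) (axis y)).1 = 0}

/-- The iterates of `G ^ N` keep the point of the axis at height `y` on one side of the axis. -/
def SignStable (G : Strip ≃ₜ Strip) (N : ℕ) (y : ℝ) : Prop :=
  (∀ n : ℕ, 1 ≤ n → 0 < ((G ^ (N * n)) (axis y)).1) ∨
    ∀ n : ℕ, 1 ≤ n → ((G ^ (N * n)) (axis y)).1 < 0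

lemma SignStable.mul {G : Strip ≃ₜ Strip} {N : ℕ} {y : ℝ} (h : SignStable G N y) {M : ℕ}
    (hM : 1 ≤ M) : SignStable G (N * M) y := by
  simp only [SignStable, mul_assoc]
  exact h.imp (fun h n hn ↦ h _ (Nat.mul_pos hM hn)) fun h n hn ↦ h _ (Nat.mul_pos hM hn)

lemma Reversible.signStable_inv {G : Strip ≃ₜ Strip} (hG : Reversible G) (N : ℕ) (y : ℝ) :
    SignStable G⁻¹ N y ↔ SignStable G N y := by
  simp only [SignStable, hG.inv_pow_axis_fst, Left.neg_pos_iff, Left.neg_neg_iff]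
  exact or_comm

lemma Reversible.returns_inv {G : Strip ≃ₜ Strip} (hG : Reversible G) :
    returns G⁻¹ = returns G := by
  simp only [returns, hG.inv_pow_axis_fst, neg_eq_zero]

lemma continuous_pow_axis_fst (G : Strip ≃ₜ Strip) (n : ℕ) :
    Continuous fun y ↦ ((G ^ n) (axis y)).1 :=
  continuous_fst.comp ((G ^ n).continuous.comp continuous_axis)

lemma pos_of_pos_of_uIcc {G : Strip ≃ₜ Strip} {y y' : ℝ} (hsub : uIcc y y' ⊆ Icc 1 2)
    (hdisj : Disjoint (uIcc y y') (returns G)) {n : ℕ} (hn : 1 ≤ n)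
    (h : 0 < ((G ^ n) (axis y)).1) : 0 < ((G ^ n) (axis y')).1 :=
  isPreconnected_uIcc.pos_of_ne_zero (continuous_pow_axis_fst G n).continuousOn
    (fun _ hu h0 ↦ hdisj.notMem_of_mem_left hu ⟨hsub hu, n, hn, h0⟩) left_mem_uIcc right_mem_uIcc h

lemma pow_fixed {G : Strip ≃ₜ Strip} {u : Strip} (h : G u = u) (n : ℕ) : (G ^ n) u = u := by
  induction n with
  | zero => rfl
  | succ n ih => rw [pow_succ, Homeomorph.mul_apply, h, ih]

lemma inv_fixed {G : Strip ≃ₜ Strip} {u : Strip} (h : G u = u) : G⁻¹ u = u := by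
  conv_lhs => rw [← h]
  exact inv_apply_self G u

lemma neBot_nhdsWithin_Icc_diff {t : ℝ} (ht : t ∈ Icc (1 : ℝ) 2) :
    (𝓝[Icc 1 2 \ {t}] t).NeBot := by
  rcases ht.2.lt_or_eq with h | rfl
  · exact (left_nhdsWithin_Ioo_neBot h).mono
      (nhdsWithin_mono _ fun y hy ↦ ⟨⟨ht.1.trans hy.1.le, hy.2.le⟩, hy.1.ne'⟩)
  · exact (right_nhdsWithin_Ioo_neBot (one_lt_two : (1 : ℝ) < 2)).mono
      (nhdsWithin_mono _ fun y hy ↦ ⟨⟨hy.1.le, hy.2.le⟩, hy.2.ne⟩)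

/-- Near a fixed point on the axis around which the axis is pushed to the right, the map sends
points on the right of the axis to points on its right. -/
lemma Reversible.eventually_pos {K : Strip ≃ₜ Strip} (hK : Reversible K) {t : ℝ}
    (ht : t ∈ Icc (1 : ℝ) 2) (hfix : K (axis t) = axis t)
    (h : ∀ᶠ y in 𝓝[Icc 1 2 \ {t}] t, 0 < (K (axis y)).1) :
    ∀ᶠ u in 𝓝 (axis t), 0 < u.1 → 0 < (K u).1 := by
  have hax : Tendsto (fun u : Strip ↦ (u.2 : ℝ)) (𝓝 (axis t)) (𝓝 t) := by
    have := (continuous_subtype_val.comp (continuous_snd (X := ℝ) (Y := Icc (1 : ℝ) 2))).tendsto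
      (axis t)
    simpa [Function.comp_def, axis_snd_coe ht] using this
  have h1 : ∀ᶠ u in 𝓝 (axis t), (u.2 : ℝ) ≠ t → 0 < (K (axis u.2)).1 := by
    rw [eventually_nhdsWithin_iff] at h
    filter_upwards [hax.eventually h] with u hu hne using hu ⟨u.2.2, hne⟩
  have h2 : ∀ᶠ u in 𝓝 (axis t), ((K u).2 : ℝ) ≠ t → 0 < (K (axis (K u).2)).1 := by
    have := K.continuous.tendsto (axis t)
    rw [hfix] at this
    exact this.eventually h1
  obtain ⟨η, hη, hball⟩ := Metric.eventually_nhds_iff_ball.1 h2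
  have hne : ∀ u ∈ Metric.ball (axis t) η ∩ {u | 0 < u.1}, (K u).1 ≠ 0 := by
    rintro u ⟨hu, hpos⟩ h0
    have hpos : 0 < u.1 := hpos
    have hKu := axis_snd _ h0
    have hu' : K⁻¹ (axis (K u).2) = u := by rw [hKu, inv_apply_self]
    by_cases hr : ((K u).2 : ℝ) = t
    · rw [hr, inv_fixed hfix] at hu'
      rw [← hu'] at hpos
      simp at hpos
    · have h3 := hball u hu hr
      have h4 := hK.inv_axis_fst (K u).2
      rw [hu'] at h4
      linarith
  obtain ⟨v, hv, hvpos⟩ : ∃ v ∈ Metric.ball (axis t) η ∩ {u | 0 < u.1}, 0 < (K v).1 := by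
    have := neBot_nhdsWithin_Icc_diff ht
    have hnear : ∀ᶠ y in 𝓝[Icc 1 2 \ {t}] t, axis y ∈ Metric.ball (axis t) η :=
      (continuous_axis.tendsto t).mono_left nhdsWithin_le_nhds
        |>.eventually (Metric.ball_mem_nhds _ hη)
    obtain ⟨y, hy1, hy2⟩ := (h.and hnear).exists
    have hopen : IsOpen (Metric.ball (axis t) η ∩ {u | 0 < (K u).1}) :=
      Metric.isOpen_ball.inter
        (isOpen_lt continuous_const (continuous_fst.comp K.continuous))
    have hpath : Tendsto (fun x : ℝ ↦ ((x, (axis y).2) : Strip)) (𝓝[>] 0) (𝓝 (axis y)) :=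
      ((Continuous.prodMk_left (axis y).2).tendsto 0).mono_left nhdsWithin_le_nhds
    obtain ⟨x, hx, hx0⟩ :=
      ((hpath.eventually (hopen.mem_nhds ⟨hy2, hy1⟩)).and self_mem_nhdsWithin).exists
    exact ⟨(x, (axis y).2), ⟨hx.1, hx0⟩, hx.2⟩
  filter_upwards [Metric.ball_mem_nhds _ hη] with u hu hpos
  exact (isPreconnected_ball_inter_pos (axis_fst t) η).pos_of_ne_zero
    (continuous_fst.comp K.continuous).continuousOn hne hv ⟨hu, hpos⟩ hvpos

lemma Reversible.eventually_pow_pos {K : Strip ≃ₜ Strip} (hK : Reversible K) {t : ℝ}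
    (ht : t ∈ Icc (1 : ℝ) 2) (hfix : K (axis t) = axis t)
    (h : ∀ᶠ y in 𝓝[Icc 1 2 \ {t}] t, 0 < (K (axis y)).1) {n : ℕ} (hn : 1 ≤ n) :
    ∀ᶠ y in 𝓝[Icc 1 2 \ {t}] t, 0 < ((K ^ n) (axis y)).1 := by
  induction n, hn using Nat.le_induction with
  | base => simpa using h
  | succ n hn ih =>
    have hcont : Tendsto (fun y ↦ (K ^ n) (axis y)) (𝓝[Icc 1 2 \ {t}] t) (𝓝 (axis t)) := by
      have := ((K ^ n).continuous.comp continuous_axis).tendsto t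
      rw [Function.comp_apply, pow_fixed hfix] at this
      exact this.mono_left nhdsWithin_le_nhds
    filter_upwards [ih, hcont.eventually (hK.eventually_pos ht hfix h)] with y hy1 hy2
    rw [pow_succ', Homeomorph.mul_apply]
    exact hy2 hy1

/-- If `G ^ N` pushes to the right the axis around a fixed point that is isolated among the
returns, then so do all its iterates. -/
lemma Reversible.signStable_of_pos {G : Strip ≃ₜ Strip} (hG : Reversible G) {t ε : ℝ}
    (ht : t ∈ Icc (1 : ℝ) 2) (hfix : G (axis t) = axis t) (hε : 0 < ε)
    (hiso : ∀ y ∈ returns G, y ∈ Ioo (t - ε) (t + ε) → y = t) {N : ℕ} (hN : 1 ≤ N)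
    (hpos : ∀ y ∈ Icc (1 : ℝ) 2, y ∈ Ioo (t - ε) (t + ε) → y ≠ t → 0 < ((G ^ N) (axis y)).1)
    {y : ℝ} (hy : y ∈ Icc (1 : ℝ) 2) (hyε : y ∈ Ioo (t - ε) (t + ε)) (hyt : y ≠ t) :
    SignStable G N y := by
  left
  intro n hn
  have hev : ∀ᶠ y in 𝓝[Icc 1 2 \ {t}] t, 0 < ((G ^ N) (axis y)).1 := by
    rw [eventually_nhdsWithin_iff]
    filter_upwards [Ioo_mem_nhds (sub_lt_self t hε) (lt_add_of_pos_right t hε)] with z hz1 hz2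
    exact hpos z hz2.1 hz1 hz2.2
  have hev' := (hG.pow N).eventually_pow_pos ht (pow_fixed hfix N) hev hn
  simp only [← pow_mul] at hev'
  obtain ⟨z, hz, hz0⟩ : ∃ z, (z ∈ Ioo y t ∨ z ∈ Ioo t y) ∧ 0 < ((G ^ (N * n)) (axis z)).1 := by
    rcases hyt.lt_or_gt with h | h
    · have := right_nhdsWithin_Ioo_neBot h
      have hsubs : Ioo y t ⊆ Icc 1 2 \ {t} := fun z hz ↦
        ⟨⟨hy.1.trans hz.1.le, hz.2.le.trans ht.2⟩, hz.2.ne⟩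
      obtain ⟨z, h1, h2⟩ := ((hev'.filter_mono (nhdsWithin_mono _ hsubs)).and
        (self_mem_nhdsWithin (s := Ioo y t))).exists
      exact ⟨z, Or.inl h2, h1⟩
    · have := left_nhdsWithin_Ioo_neBot h
      have hsubs : Ioo t y ⊆ Icc 1 2 \ {t} := fun z hz ↦
        ⟨⟨ht.1.trans hz.1.le, hz.2.le.trans hy.2⟩, hz.1.ne'⟩
      obtain ⟨z, h1, h2⟩ := ((hev'.filter_mono (nhdsWithin_mono _ hsubs)).and
        (self_mem_nhdsWithin (s := Ioo t y))).exists
      exact ⟨z, Or.inr h2, h1⟩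
  have hsub : uIcc z y ⊆ Icc 1 2 := by
    apply ordConnected_Icc.uIcc_subset _ hy
    rcases hz with hz | hz
    · exact ⟨hy.1.trans hz.1.le, hz.2.le.trans ht.2⟩
    · exact ⟨ht.1.trans hz.1.le, hz.2.le.trans hy.2⟩
  refine pos_of_pos_of_uIcc hsub ?_ (Nat.mul_pos hN hn) hz0
  rw [disjoint_left]
  intro w hw hret
  rcases hz with hz | hz
  · rw [uIcc_of_ge hz.1.le] at hw
    have := hiso w hret ⟨hyε.1.trans_le hw.1, by linarith [hw.2, hz.2]⟩
    linarith [hw.2, hz.2]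
  · rw [uIcc_of_le hz.2.le] at hw
    have := hiso w hret ⟨by linarith [hw.1, hz.1], hw.2.trans_lt hyε.2⟩
    linarith [hw.1, hz.1]

/-- Sign stability propagates across a point of the axis, up to replacing the map by an iterate. -/
lemma Reversible.exists_signStable_near {G : Strip ≃ₜ Strip} (hG : Reversible G)
    (hfix : ∀ y ∈ returns G, G (axis y) = axis y) {t ε : ℝ}
    (ht : t ∈ Icc (1 : ℝ) 2) (hε : 0 < ε)
    (hiso : ∀ y ∈ returns G, y ∈ Ioo (t - ε) (t + ε) → y = t) {N : ℕ} (hN : 1 ≤ N)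
    {y₀ : ℝ} (hy₀ : y₀ ∈ Icc (1 : ℝ) 2) (hy₀ε : y₀ ∈ Ioo (t - ε) (t + ε)) (hy₀r : y₀ ∉ returns G)
    (hst : SignStable G N y₀) :
    ∃ M : ℕ, 1 ≤ M ∧ ∀ y ∈ Icc (1 : ℝ) 2, y ∈ Ioo (t - ε) (t + ε) → y ∉ returns G →
      SignStable G M y := by
  wlog hpos : ∀ n : ℕ, 1 ≤ n → 0 < ((G ^ (N * n)) (axis y₀)).1 generalizing G
  · have hneg := hst.resolve_left hpos
    have := this hG.inv (fun y hy ↦ inv_fixed (hfix y (hG.returns_inv ▸ hy)))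
      (by rwa [hG.returns_inv]) (by rwa [hG.returns_inv]) ((hG.signStable_inv _ _).2 hst)
      (fun n hn ↦ by rw [hG.inv_pow_axis_fst]; linarith [hneg n hn])
    simpa only [hG.returns_inv, hG.signStable_inv] using this
  have hsub : ∀ {y y'}, y ∈ Icc (1 : ℝ) 2 → y' ∈ Icc (1 : ℝ) 2 → uIcc y y' ⊆ Icc 1 2 :=
    fun h h' ↦ ordConnected_Icc.uIcc_subset h h'
  have hsame : ∀ {y y'}, y ∈ Ioo (t - ε) (t + ε) → y' ∈ Ioo (t - ε) (t + ε) →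
      (t ∈ uIcc y y' → t ∉ returns G) → Disjoint (uIcc y y') (returns G) := by
    intro y y' h h' hne
    rw [disjoint_left]
    intro w hw hret
    have := hiso w hret (ordConnected_Ioo.uIcc_subset h h' hw)
    subst this
    exact hne hw hret
  by_cases htr : t ∈ returns G
  · have hy₀t : y₀ ≠ t := fun h ↦ hy₀r (h ▸ htr)
    by_cases hj : ∃ j : ℕ, 1 ≤ j ∧ ∀ y ∈ Icc (1 : ℝ) 2, y ∈ Ioo (t - ε) (t + ε) → y ≠ t →
        0 < ((G ^ (N * j)) (axis y)).1
    · obtain ⟨j, hj1, hj⟩ := hj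
      exact ⟨N * j, Nat.mul_pos hN hj1, fun y hy hyε hyr ↦
        hG.signStable_of_pos ht (hfix t htr) hε hiso (Nat.mul_pos hN hj1) hj hy hyε
          fun h ↦ hyr (h ▸ htr)⟩
    · push Not at hj
      refine ⟨N, hN, fun y hy hyε hyr ↦ ?_⟩
      by_cases hside : t ∈ uIcc y₀ y
      · right
        intro n hn
        obtain ⟨z, hz, hzε, hzt, hz0⟩ := hj n hn
        have hyt : y ≠ t := fun h ↦ hyr (h ▸ htr)
        have hzside : t ∉ uIcc z y := by
          intro h
          have h1 : t ∉ uIcc y₀ z := by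
            rw [mem_uIcc] at *
            grind
          exact (pos_of_pos_of_uIcc (hsub hy₀ hz) (hsame hy₀ε hzε fun h ↦ absurd h h1)
            (Nat.mul_pos hN hn) (hpos n hn)).not_ge hz0
        by_contra! hge
        have hne : ((G ^ (N * n)) (axis y)).1 ≠ 0 := fun h ↦ hyr ⟨hy, _, Nat.mul_pos hN hn, h⟩
        refine (pos_of_pos_of_uIcc (hsub hy hz) (hsame hyε hzε fun h ↦ absurd h ?_)
          (Nat.mul_pos hN hn) (hge.lt_of_ne' hne)).not_ge hz0
        rwa [uIcc_comm]
      · exact Or.inl fun n hn ↦ pos_of_pos_of_uIcc (hsub hy₀ hy)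
          (hsame hy₀ε hyε fun h ↦ absurd h hside) (Nat.mul_pos hN hn) (hpos n hn)
  · exact ⟨N, hN, fun y hy hyε _ ↦ Or.inl fun n hn ↦ pos_of_pos_of_uIcc (hsub hy₀ hy)
      (hsame hy₀ε hyε fun _ ↦ htr) (Nat.mul_pos hN hn) (hpos n hn)⟩

lemma exists_isolating {s : Set ℝ} (hs : s.Finite) (t : ℝ) :
    ∃ ε > 0, ∀ y ∈ s, y ∈ Ioo (t - ε) (t + ε) → y = t := by
  have h : (s \ {t})ᶜ ∈ 𝓝 t := (hs.subset sdiff_subset).isClosed.isOpen_compl.mem_nhds (by simp)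
  obtain ⟨ε, hε, hsub⟩ := Metric.mem_nhds_iff.1 h
  refine ⟨ε, hε, fun y hy hyε ↦ ?_⟩
  rw [← Real.ball_eq_Ioo] at hyε
  by_contra hne
  exact hsub hyε ⟨hy, hne⟩

/-- Near the endpoint of the axis all points of the axis are sign stable, as soon as the endpoint
is sign stable or fixed. -/
lemma Reversible.exists_signStable_near_one {G : Strip ≃ₜ Strip} (hG : Reversible G)
    (hfix : ∀ y ∈ returns G, G (axis y) = axis y) {ε : ℝ} (hε : 0 < ε)
    (hiso : ∀ y ∈ returns G, y ∈ Ioo (1 - ε) (1 + ε) → y = 1)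
    (hend : 1 ∉ returns G → SignStable G 1 1) :
    ∃ M : ℕ, 1 ≤ M ∧ ∀ y ∈ Icc (1 : ℝ) 2, y ∈ Ioo (1 - ε) (1 + ε) → y ∉ returns G →
      SignStable G M y := by
  have h1 : (1 : ℝ) ∈ Icc (1 : ℝ) 2 := by norm_num
  by_cases hr : (1 : ℝ) ∈ returns G
  · refine ⟨1, le_rfl, fun y hy hyε hyr ↦ ?_⟩
    have hy1 : y ≠ 1 := fun h ↦ hyr (h ▸ hr)
    wlog hpos : 0 < (G (axis y)).1 generalizing G
    · have hne : (G (axis y)).1 ≠ 0 := fun h ↦ hyr ⟨hy, 1, le_rfl, by simpa using h⟩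
      rw [← hG.signStable_inv]
      exact this hG.inv (fun y hy ↦ inv_fixed (hfix y (hG.returns_inv ▸ hy)))
        (by rwa [hG.returns_inv]) (by simpa [hG.returns_inv, hG.signStable_inv] using hend)
        (by rwa [hG.returns_inv]) (by rwa [hG.returns_inv])
        (by rw [hG.inv_axis_fst]; exact neg_pos.2 (lt_of_le_of_ne (not_lt.1 hpos) hne))
    refine hG.signStable_of_pos h1 (hfix 1 hr) hε hiso le_rfl (fun z hz hzε hz1 ↦ ?_) hy hyε hy1
    refine pos_of_pos_of_uIcc (y := y) (ordConnected_Icc.uIcc_subset hy hz) ?_ le_rfl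
      (by simpa using hpos)
    rw [disjoint_left]
    intro w hw hret
    have hw1 := hiso w hret (ordConnected_Ioo.uIcc_subset hyε hzε hw)
    have hy' := hy.1.lt_of_ne' hy1
    have hz' := hz.1.lt_of_ne' hz1
    rw [hw1, mem_uIcc] at hw
    rcases hw with hw | hw <;> linarith [hw.1, hw.2]
  · exact hG.exists_signStable_near hfix h1 hε hiso le_rfl h1 ⟨by linarith, by linarith⟩ hr
      (hend hr)

/-- With finitely many returns, all of them fixed, some iterate moves every other point of the
axis to a constant side. -/
lemma Reversible.exists_signStable {G : Strip ≃ₜ Strip} (hG : Reversible G)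
    (hfin : (returns G).Finite) (hfix : ∀ y ∈ returns G, G (axis y) = axis y)
    (hend : 1 ∉ returns G → SignStable G 1 1) :
    ∃ M : ℕ, 1 ≤ M ∧ ∀ y ∈ Icc (1 : ℝ) 2, y ∉ returns G → SignStable G M y := by
  let P : ℝ → Prop := fun t ↦
    ∃ M : ℕ, 1 ≤ M ∧ ∀ᶠ y in 𝓝[Icc 1 2] t, y ∉ returns G → SignStable G M y
  have hIoo : ∀ {t ε : ℝ}, 0 < ε → Ioo (t - ε) (t + ε) ∈ 𝓝[Icc 1 2] t := fun hε ↦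
    mem_nhdsWithin_of_mem_nhds (Ioo_mem_nhds (sub_lt_self _ hε) (lt_add_of_pos_right _ hε))
  have hP1 : P 1 := by
    obtain ⟨ε, hε, hiso⟩ := exists_isolating hfin 1
    obtain ⟨M, hM, h⟩ := hG.exists_signStable_near_one hfix hε hiso hend
    refine ⟨M, hM, ?_⟩
    filter_upwards [hIoo hε, self_mem_nhdsWithin] with y h1 h2 using h y h2 h1
  have hloc : ∀ t ∈ Icc (1 : ℝ) 2, ∀ᶠ t' in 𝓝[Icc 1 2] t, (P t ↔ P t') := by
    intro t ht
    have hfwd : ∀ᶠ t' in 𝓝[Icc 1 2] t, P t → P t' := by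
      by_cases h : P t
      · obtain ⟨M, hM, h⟩ := h
        filter_upwards [eventually_eventually_nhdsWithin.2 h] with t' ht' _ using ⟨M, hM, ht'⟩
      · simp [h]
    obtain ⟨ε, hε, hiso⟩ := exists_isolating hfin t
    filter_upwards [hfwd, hIoo hε, self_mem_nhdsWithin] with t' h1 h2 ht'
    refine ⟨h1, fun ⟨N, hN, h⟩ ↦ ?_⟩
    have := neBot_nhdsWithin_Icc_diff ht'
    have hnr : ∀ᶠ y in 𝓝[Icc 1 2 \ {t'}] t', y ∉ returns G := by
      obtain ⟨δ, hδ, hiso'⟩ := exists_isolating hfin t'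
      filter_upwards [nhdsWithin_mono _ sdiff_subset (hIoo hδ), self_mem_nhdsWithin] with y hy hy'
      exact fun hr ↦ hy'.2 (hiso' y hr hy)
    have hI : ∀ᶠ y in 𝓝[Icc 1 2 \ {t'}] t', y ∈ Ioo (t - ε) (t + ε) :=
      mem_nhdsWithin_of_mem_nhds (isOpen_Ioo.mem_nhds h2)
    have hm : ∀ᶠ y in 𝓝[Icc 1 2 \ {t'}] t', y ∈ Icc 1 2 \ {t'} := self_mem_nhdsWithin
    obtain ⟨y, hy1, hy2, hy3, hy4⟩ := (hnr.and
      ((h.filter_mono (nhdsWithin_mono t' sdiff_subset)).and (hI.and hm))).exists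
    obtain ⟨M, hM, hst⟩ := hG.exists_signStable_near hfix ht hε hiso hN hy4.1 hy3 hy1 (hy2 hy1)
    refine ⟨M, hM, ?_⟩
    filter_upwards [hIoo hε, self_mem_nhdsWithin] with y h1 h2 using hst y h2 h1
  have hall : ∀ t ∈ Icc (1 : ℝ) 2, P t := fun t ht ↦
    (isPreconnected_Icc.induction₂ (fun s t ↦ (P s ↔ P t)) hloc
      (fun _ _ _ _ _ _ h h' ↦ h.trans h') (fun _ _ _ _ h ↦ h.symm) (by norm_num) ht).1 hP1
  refine isCompact_Icc.induction_on
    (p := fun s ↦ ∃ M : ℕ, 1 ≤ M ∧ ∀ y ∈ s, y ∉ returns G → SignStable G M y)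
    ⟨1, le_rfl, by simp⟩ ?_ ?_ ?_
  · rintro s s' hss ⟨M, hM, h⟩
    exact ⟨M, hM, fun y hy ↦ h y (hss hy)⟩
  · rintro s s' ⟨M, hM, h⟩ ⟨M', hM', h'⟩
    refine ⟨M * M', Nat.mul_pos hM hM', fun y hy hyr ↦ ?_⟩
    rcases hy with hy | hy
    · exact (h y hy hyr).mul hM'
    · rw [mul_comm]
      exact (h' y hy hyr).mul hM
  · intro t ht
    obtain ⟨M, hM, h⟩ := hall t ht
    exact ⟨_, h, M, hM, fun y hy ↦ hy⟩

/-- A recurrent reversible homeomorphism moving every point of the axis to a constant side, except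
for finitely many fixed points, does not exist. -/
lemma Reversible.false_of_signStable {K : Strip ≃ₜ Strip} (hK : Reversible K)
    (hfin : (returns K).Finite) (hfix : ∀ y ∈ returns K, K (axis y) = axis y)
    (hst : ∀ y ∈ Icc (1 : ℝ) 2, y ∉ returns K → SignStable K 1 y)
    (hrec : ∀ C : Set Strip, IsOpen C → C.Nonempty → ∃ n : ℕ, 1 ≤ n ∧ ∃ w ∈ C, (K ^ n) w ∈ C) :
    False := by
  obtain ⟨y₀, hy₀, hy₀r⟩ : ∃ y ∈ Icc (1 : ℝ) 2, y ∉ returns K := by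
    by_contra! h
    exact (Icc_infinite (one_lt_two : (1 : ℝ) < 2)) (hfin.subset h)
  wlog hpos : ∀ n : ℕ, 1 ≤ n → 0 < ((K ^ n) (axis y₀)).1 generalizing K
  · have hneg := (hst y₀ hy₀ hy₀r).resolve_left (by simpa using hpos)
    simp only [one_mul] at hneg
    refine this hK.inv (by rwa [hK.returns_inv])
      (fun y hy ↦ inv_fixed (hfix y (hK.returns_inv ▸ hy)))
      (by simpa only [hK.returns_inv, hK.signStable_inv] using hst) ?_ (by rwa [hK.returns_inv])
      (fun n hn ↦ by rw [hK.inv_pow_axis_fst]; linarith [hneg n hn])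
    intro C hC hne
    obtain ⟨n, hn, w, hw, hw'⟩ := hrec C hC hne
    exact ⟨n, hn, _, hw', by rwa [inv_pow, inv_apply_self]⟩
  have hinv : (K⁻¹ (axis y₀)).1 < 0 := by
    rw [hK.inv_axis_fst]
    simpa using hpos 1 le_rfl
  have hopen : IsOpen {u : Strip | (K⁻¹ u).1 < 0} :=
    isOpen_lt (continuous_fst.comp (K⁻¹).continuous) continuous_const
  obtain ⟨η, hη, hball⟩ := Metric.isOpen_iff.1 hopen _ hinv
  set C := Metric.ball (axis y₀) η ∩ {u : Strip | 0 < u.1} with hCdef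
  have hclos : Tendsto (fun x : ℝ ↦ ((x, (axis y₀).2) : Strip)) (𝓝[>] 0) (𝓝 (axis y₀)) :=
    ((Continuous.prodMk_left (axis y₀).2).tendsto 0).mono_left nhdsWithin_le_nhds
  have hmem : ∀ᶠ x : ℝ in 𝓝[>] 0, ((x, (axis y₀).2) : Strip) ∈ C := by
    filter_upwards [hclos.eventually (Metric.ball_mem_nhds _ hη), self_mem_nhdsWithin]
      with x h1 h2 using ⟨h1, h2⟩
  have hCo : IsOpen C := Metric.isOpen_ball.inter (isOpen_lt continuous_const continuous_fst)
  obtain ⟨n, hn, w, hw, hw'⟩ := hrec C hCo (hmem.exists.imp' _ fun _ h ↦ h)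
  obtain ⟨m, rfl⟩ : ∃ m, n = m + 1 := ⟨n - 1, by omega⟩
  have hne : ∀ u ∈ C, ((K ^ m) u).1 ≠ 0 := by
    rintro u ⟨hu, hupos⟩ h0
    have hupos : 0 < u.1 := hupos
    have huneg : (K⁻¹ u).1 < 0 := hball hu
    have hax := axis_snd _ h0
    set r : ℝ := (((K ^ m) u).2 : ℝ)
    have hr : r ∈ Icc (1 : ℝ) 2 := ((K ^ m) u).2.2
    have hu1 : (K ^ m)⁻¹ (axis r) = u := by rw [hax, inv_apply_self]
    have hu2 : (K ^ (m + 1))⁻¹ (axis r) = K⁻¹ u := by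
      rw [pow_succ, mul_inv_rev, Homeomorph.mul_apply, hu1]
    by_cases hrr : r ∈ returns K
    · rw [inv_fixed (pow_fixed (hfix r hrr) m)] at hu1
      rw [← hu1] at hupos
      simp at hupos
    · have e1 := (hK.pow m).inv_axis_fst r
      have e2 := (hK.pow (m + 1)).inv_axis_fst r
      rw [hu1] at e1
      rw [hu2] at e2
      rcases hst r hr hrr with h | h
      · rcases Nat.eq_zero_or_pos m with rfl | hm
        · simp at e1
          linarith
        · have := h m hm
          rw [one_mul] at this
          linarith
      · have := h (m + 1) (by omega)
        rw [one_mul] at this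
        linarith
  have hwneg : ((K ^ m) w).1 < 0 := by
    have : (K⁻¹ ((K ^ (m + 1)) w)).1 < 0 := hball hw'.1
    rwa [pow_succ', Homeomorph.mul_apply, inv_apply_self] at this
  have hCneg : ∀ u ∈ C, ((K ^ m) u).1 < 0 := fun u hu ↦
    (isPreconnected_ball_inter_pos (axis_fst y₀) η).neg_of_ne_zero
      (continuous_fst.comp (K ^ m).continuous).continuousOn hne hw hu hwneg
  rcases Nat.eq_zero_or_pos m with rfl | hm
  · have h1 : w.1 < 0 := hwneg
    have h2 : 0 < w.1 := hw.2
    linarith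
  · have hlim : ∀ᶠ x : ℝ in 𝓝[>] 0, 0 < ((K ^ m) ((x, (axis y₀).2) : Strip)).1 :=
      hclos.eventually ((isOpen_lt continuous_const
        (continuous_fst.comp (K ^ m).continuous)).mem_nhds (hpos m hm))
    obtain ⟨x, h1, h2⟩ := (hlim.and hmem).exists
    exact (hCneg _ h2).not_gt h1

lemma returns_pow_subset (G : Strip ≃ₜ Strip) {N : ℕ} (hN : 1 ≤ N) :
    returns (G ^ N) ⊆ returns G := by
  rintro y ⟨hy, n, hn, h⟩
  exact ⟨hy, N * n, Nat.mul_pos hN hn, by rwa [pow_mul]⟩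

lemma Reversible.exists_pow_fixed {G : Strip ≃ₜ Strip} (hG : Reversible G) {y : ℝ}
    (hy : y ∈ returns G) : ∃ n : ℕ, 1 ≤ n ∧ (G ^ n) (axis y) = axis y := by
  obtain ⟨-, n, hn, h⟩ := hy
  refine ⟨n + n, by omega, ?_⟩
  have h1 : (G ^ n)⁻¹ (axis y) = (G ^ n) (axis y) := by
    rw [(hG.pow n).inv_axis, mirror_apply, h, neg_zero, ← h]
  rw [pow_add, Homeomorph.mul_apply, ← h1, apply_inv_self]

/-- A reversible homeomorphism of the strip all of whose iterates are recurrent and which does not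
exchange the two sides of the axis on the boundary has infinitely many returns. -/
lemma Reversible.false_of_returns_finite {G : Strip ≃ₜ Strip} (hG : Reversible G)
    (hfin : (returns G).Finite) (hend : SignStable G 1 1 ∨ G (axis 1) = axis 1)
    (hrec : ∀ N : ℕ, 1 ≤ N → ∀ C : Set Strip, IsOpen C → C.Nonempty →
      ∃ n : ℕ, 1 ≤ n ∧ ∃ w ∈ C, (G ^ (N * n)) w ∈ C) : False := by
  have hper : ∀ y ∈ returns G, ∃ n : ℕ, 1 ≤ n ∧ (G ^ n) (axis y) = axis y :=
    fun y hy ↦ hG.exists_pow_fixed hy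
  choose! ν hν hνfix using hper
  set N := ∏ y ∈ hfin.toFinset, ν y with hNdef
  have hN : 1 ≤ N := Finset.one_le_prod' fun y hy ↦ hν y (hfin.mem_toFinset.1 hy)
  have hsub : ∀ {M}, 1 ≤ M → returns (G ^ M) ⊆ returns G := returns_pow_subset G
  have hfixN : ∀ y ∈ returns G, (G ^ N) (axis y) = axis y := by
    intro y hy
    obtain ⟨c, hc⟩ := Finset.dvd_prod_of_mem ν (hfin.mem_toFinset.2 hy)
    rw [hNdef, hc, pow_mul]
    exact pow_fixed (hνfix y hy) c
  have h1 : (1 : ℝ) ∈ Icc (1 : ℝ) 2 := by norm_num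
  have hendN : 1 ∉ returns (G ^ N) → SignStable (G ^ N) 1 1 := by
    intro hr
    rcases hend with h | h
    · have := h.mul hN
      simpa [SignStable, pow_mul] using this
    · exact absurd ⟨h1, 1, le_rfl, by rw [pow_one, pow_fixed h, axis_fst]⟩ hr
  obtain ⟨M, hM, hst⟩ := (hG.pow N).exists_signStable (hfin.subset (hsub hN))
    (fun y hy ↦ hfixN y (hsub hN hy)) hendN
  have hNM : 1 ≤ N * M := Nat.mul_pos hN hM
  refine (hG.pow (N * M)).false_of_signStable (hfin.subset (hsub hNM))
    (fun y hy ↦ ?_) (fun y hy hyr ↦ ?_) fun C hC hne ↦ ?_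
  · rw [pow_mul]
    exact pow_fixed (hfixN y (hsub hNM hy)) M
  · have hyr' : y ∉ returns (G ^ N) := fun h ↦ hyr ⟨hy, 1, le_rfl, by
      rw [pow_one, pow_mul, pow_fixed (hfixN y (hsub hN h)), axis_fst]⟩
    simpa [SignStable, pow_mul] using hst y hy hyr'
  · simpa only [← pow_mul] using hrec (N * M) hNM C hC hne

/-! ### Homeomorphisms commuting with the deck transformations -/

/-- The deck transformation `(x, r) ↦ (x + 1, r)` of the strip. -/
def shift : Strip ≃ₜ Strip := (Homeomorph.addRight (1 : ℝ)).prodCongr (Homeomorph.refl _)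

lemma shift_apply (u : Strip) : shift u = (u.1 + 1, u.2) := rfl

lemma shift_inv_apply (u : Strip) : shift⁻¹ u = (u.1 - 1, u.2) := by
  apply shift.injective
  rw [apply_inv_self, shift_apply]
  simp

lemma shift_zpow_apply (k : ℤ) (u : Strip) : (shift ^ k) u = (u.1 + k, u.2) := by
  induction k with
  | zero => simp
  | succ n ih =>
    rw [add_comm, zpow_add, Homeomorph.mul_apply, ih, zpow_one, shift_apply]
    push_cast
    ext <;> simp [add_assoc, add_comm]
  | pred n ih =>
    rw [sub_eq_neg_add, zpow_add, Homeomorph.mul_apply, ih, zpow_neg_one, shift_inv_apply]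
    push_cast
    ext <;> simp; ring

lemma mirror_mul_shift_zpow (k : ℤ) : mirror * shift ^ k = shift ^ (-k) * mirror := by
  ext u <;>
    simp only [Homeomorph.mul_apply, shift_zpow_apply, mirror_apply, Int.cast_neg, neg_add]

lemma commute_zpow_apply {K : Strip ≃ₜ Strip} (hK : Commute K shift) (k : ℤ) (u : Strip) :
    K ((shift ^ k) u) = (shift ^ k) (K u) := by
  rw [← Homeomorph.mul_apply, ← Homeomorph.mul_apply, (hK.zpow_right k).eq]

/-- A point on the left of the image of the axis is the image of a point on the left of the
axis. -/
lemma inv_fst_neg {K : Strip ≃ₜ Strip} (hK : Commute K shift) {z : Strip}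
    (h : ∀ r, z.1 < (K (axis r)).1) : (K⁻¹ z).1 < 0 := by
  have hpath : Continuous fun t : ℝ ↦ (K⁻¹ ((z.1 - t, z.2) : Strip)).1 :=
    continuous_fst.comp ((K⁻¹).continuous.comp (by fun_prop))
  obtain ⟨m, hm⟩ := exists_nat_gt (K⁻¹ z).1
  have hstart : (K⁻¹ ((z.1 - m, z.2) : Strip)).1 < 0 := by
    have h1 : ((z.1 - m, z.2) : Strip) = (shift ^ (-(m : ℤ))) z := by
      rw [shift_zpow_apply]
      push_cast
      rw [sub_eq_add_neg]
    rw [h1, commute_zpow_apply hK.inv_left, shift_zpow_apply]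
    push_cast
    linarith
  have h0 : (K⁻¹ ((z.1 - 0, z.2) : Strip)).1 < 0 := by
    refine (isPreconnected_Ici (a := (0 : ℝ))).neg_of_ne_zero hpath.continuousOn
      (fun t ht h0 ↦ ?_) (mem_Ici.2 m.cast_nonneg) self_mem_Ici hstart
    have h2 := congrArg (fun u ↦ (K u).1) (axis_snd _ h0)
    simp only [apply_inv_self] at h2
    have h3 := h (K⁻¹ ((z.1 - t, z.2) : Strip)).2
    have h4 : (0 : ℝ) ≤ t := ht
    linarith
  simpa using h0

lemma Reversible.inv_fst_pos {K : Strip ≃ₜ Strip} (hrev : Reversible K) (hK : Commute K shift)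
    {z : Strip} (h : ∀ r, (K (axis r)).1 < z.1) : 0 < (K⁻¹ z).1 := by
  have h1 := inv_fst_neg hK.inv_left (z := mirror z) fun r ↦ by
    rw [hrev.inv_axis_fst, mirror_apply]
    exact neg_lt_neg (h r)
  rw [inv_inv] at h1
  have h2 : K⁻¹ z = mirror (K (mirror z)) := by
    rw [← show mirror * K * mirror = K⁻¹ from hrev, Homeomorph.mul_apply, Homeomorph.mul_apply]
  rw [h2, mirror_apply]
  exact neg_pos.2 h1

lemma fst_axis_le {K : Strip ≃ₜ Strip} (hK : Commute K shift) {z : Strip} (hz : K z = z) {B : ℝ}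
    (hB : ∀ r r', (K (axis r)).1 - (K (axis r')).1 ≤ B) (r : ℝ) : (K (axis r)).1 ≤ 1 + B := by
  by_contra! hr
  have h1 := inv_fst_neg hK (z := (shift ^ ⌈-z.1⌉) z) fun r' ↦ by
    rw [shift_zpow_apply]
    have := hB r r'
    have := Int.ceil_lt_add_one (-z.1)
    dsimp only
    linarith
  rw [commute_zpow_apply hK.inv_left, inv_fixed hz, shift_zpow_apply] at h1
  have := Int.le_ceil (-z.1)
  dsimp only at h1
  linarith

lemma Reversible.abs_inv_fst_sub_le {K : Strip ≃ₜ Strip} (hrev : Reversible K)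
    (hK : Commute K shift) {B : ℝ} (hB : ∀ r, |(K (axis r)).1| ≤ B) (z : Strip) :
    |(K⁻¹ z).1 - z.1| ≤ B + 1 := by
  rw [abs_sub_le_iff]
  constructor
  · have h1 := inv_fst_neg hK (z := (shift ^ (⌈-B - z.1⌉ - 1)) z) fun r ↦ by
      rw [shift_zpow_apply]
      have := (abs_le.1 (hB r)).1
      have := Int.ceil_lt_add_one (-B - z.1)
      push_cast
      linarith
    rw [commute_zpow_apply hK.inv_left, shift_zpow_apply] at h1
    have := Int.le_ceil (-B - z.1)
    push_cast at h1
    linarith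
  · have h1 := hrev.inv_fst_pos hK (z := (shift ^ (⌊B - z.1⌋ + 1)) z) fun r ↦ by
      rw [shift_zpow_apply]
      have := (abs_le.1 (hB r)).2
      have := Int.lt_floor_add_one (B - z.1)
      push_cast
      linarith
    rw [commute_zpow_apply hK.inv_left, shift_zpow_apply] at h1
    have := Int.floor_le (B - z.1)
    push_cast at h1
    linarith

/-- The parameters of the points of the axis that come back to a translate of the axis. -/
def intReturns (G : Strip ≃ₜ Strip) : Set ℝ :=
  {y | y ∈ Icc (1 : ℝ) 2 ∧ ∃ n : ℕ, 1 ≤ n ∧ ∃ k : ℤ, ((G ^ n) (axis y)).1 = k}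

lemma returns_subset_intReturns (G : Strip ≃ₜ Strip) : returns G ⊆ intReturns G := by
  rintro y ⟨hy, n, hn, h⟩
  exact ⟨hy, n, hn, 0, by simpa using h⟩

/-- The image of the axis meets as many translates of the axis as its width allows. -/
lemma fst_axis_sub_le {G : Strip ≃ₜ Strip} (hfin : (intReturns G).Finite) {n : ℕ} (hn : 1 ≤ n)
    (r r' : ℝ) :
    ((G ^ n) (axis r)).1 - ((G ^ n) (axis r')).1 ≤ hfin.toFinset.card + 1 := by
  set b := ((G ^ n) (axis r)).1
  set a := ((G ^ n) (axis r')).1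
  have hhit : ∀ k ∈ Finset.Icc ⌈a⌉ ⌊b⌋, ∃ s ∈ hfin.toFinset, ((G ^ n) (axis s)).1 = k := by
    intro k hk
    rw [Finset.mem_Icc] at hk
    obtain ⟨s, hs⟩ := intermediate_value_univ r' r (continuous_pow_axis_fst G n)
      ⟨Int.ceil_le.1 hk.1, Int.le_floor.1 hk.2⟩
    refine ⟨(axis s).2, ?_, ?_⟩
    · rw [hfin.mem_toFinset]
      exact ⟨(axis s).2.2, n, hn, k, by rw [axis_snd _ (axis_fst s)]; exact hs⟩
    · rw [axis_snd _ (axis_fst s)]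
      exact hs
  choose! s hs hsk using hhit
  have hcard := Finset.card_le_card_of_injOn s hs (by
    intro k hk l hl h
    have h1 := hsk k hk
    rw [h, hsk l hl] at h1
    exact_mod_cast h1.symm)
  rw [Int.card_Icc] at hcard
  have h1 : ⌊b⌋ + 1 - ⌈a⌉ ≤ hfin.toFinset.card := by omega
  have h2 : (⌊b⌋ : ℝ) + 1 - ⌈a⌉ ≤ hfin.toFinset.card := by exact_mod_cast h1
  have := Int.lt_floor_add_one b
  have := Int.ceil_lt_add_one a
  linarith

lemma Reversible.exists_abs_pow_fst_sub_le {G : Strip ≃ₜ Strip} (hG : Reversible G)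
    (hT : Commute G shift) (hfin : (intReturns G).Finite) {z : Strip} (hz : G z = z) :
    ∃ B : ℝ, ∀ n : ℕ, 1 ≤ n → ∀ w : Strip, |((G ^ n) w).1 - w.1| ≤ B := by
  refine ⟨1 + (hfin.toFinset.card + 1) + 1, fun n hn w ↦ ?_⟩
  have hTn : Commute (G ^ n) shift := hT.pow_left n
  have hb : ∀ r, |((G ^ n)⁻¹ (axis r)).1| ≤ 1 + (hfin.toFinset.card + 1) := by
    intro r
    have h1 := fst_axis_le hTn (pow_fixed hz n) (fst_axis_sub_le hfin hn) r
    have h2 := fst_axis_le hTn.inv_left (inv_fixed (pow_fixed hz n)) (fun r r' ↦ by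
      rw [(hG.pow n).inv_axis_fst, (hG.pow n).inv_axis_fst, neg_sub_neg]
      exact fst_axis_sub_le hfin hn r' r) r
    rw [(hG.pow n).inv_axis_fst] at h2 ⊢
    rw [abs_neg, abs_le]
    constructor <;> linarith
  simpa using (hG.pow n).inv.abs_inv_fst_sub_le hTn.inv_left hb w

/-- Recurrence up to deck transformations is recurrence, when displacements are bounded. -/
lemma exists_pow_mem_of_bounded {G : Strip ≃ₜ Strip} (hT : Commute G shift) {B : ℝ}
    (hB : ∀ n : ℕ, 1 ≤ n → ∀ w : Strip, |((G ^ n) w).1 - w.1| ≤ B) {N : ℕ} (hN : 1 ≤ N)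
    (hrec : ∀ C : Set Strip, IsOpen C → C.Nonempty →
      ∃ w ∈ C, ∃ᶠ n : ℕ in atTop, ∃ k : ℤ, (shift ^ k) ((G ^ (N * n)) w) ∈ C)
    {C : Set Strip} (hC : IsOpen C) (hne : C.Nonempty) :
    ∃ n : ℕ, 1 ≤ n ∧ ∃ w ∈ C, (G ^ (N * n)) w ∈ C := by
  obtain ⟨c, hc⟩ := hne
  obtain ⟨z, ⟨-, hz⟩, hfreq⟩ := hrec (C ∩ {u | |u.1 - c.1| < 1})
    (hC.inter (isOpen_lt (by fun_prop) continuous_const)) ⟨c, hc, by simp⟩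
  have hfreq' := hfreq.and_eventually (eventually_ge_atTop 1)
  rw [Nat.frequently_atTop_iff_infinite] at hfreq'
  have hk : ∀ n ∈ {n : ℕ | (∃ k : ℤ, (shift ^ k) ((G ^ (N * n)) z) ∈
      C ∩ {u | |u.1 - c.1| < 1}) ∧ 1 ≤ n}, ∃ k : ℤ, k ∈ Icc (-⌈B + 2⌉) ⌈B + 2⌉ ∧
        (shift ^ k) ((G ^ (N * n)) z) ∈ C := by
    rintro n ⟨⟨k, hkC, hk1⟩, hn⟩
    refine ⟨k, ?_, hkC⟩
    have h1 : |((G ^ (N * n)) z).1 + k - c.1| < 1 := by simpa [shift_zpow_apply] using hk1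
    have h2 : |z.1 - c.1| < 1 := hz
    have h3 := hB (N * n) (Nat.mul_pos hN hn) z
    rw [abs_lt] at h1 h2
    rw [abs_le] at h3
    have h4 : (k : ℝ) ≤ ⌈B + 2⌉ := by linarith [Int.le_ceil (B + 2)]
    have h5 : -(⌈B + 2⌉ : ℝ) ≤ k := by linarith [Int.le_ceil (B + 2)]
    exact ⟨by exact_mod_cast h5, by exact_mod_cast h4⟩
  choose! κ hκ hκC using hk
  obtain ⟨n₁, hn₁, n₂, hn₂, hlt, heq⟩ := hfreq'.exists_lt_map_eq_of_mapsTo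
    (f := κ) (t := Icc (-⌈B + 2⌉) ⌈B + 2⌉) (fun n hn ↦ hκ n hn) (finite_Icc _ _)
  refine ⟨n₂ - n₁, by omega, _, hκC n₁ hn₁, ?_⟩
  rw [commute_zpow_apply (hT.pow_left _), ← Homeomorph.mul_apply (G ^ _), ← pow_add, ← mul_add,
    Nat.sub_add_cancel hlt.le, heq]
  exact hκC n₂ hn₂

/-- On an invariant boundary component, orbits are monotone. -/
lemma signStable_one_or_fixed {G : Strip ≃ₜ Strip} (hT : Commute G shift)
    (hbot : ∀ u : Strip, (u.2 : ℝ) = 1 → ((G u).2 : ℝ) = 1) :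
    SignStable G 1 1 ∨ G (axis 1) = axis 1 := by
  set b : Icc (1 : ℝ) 2 := (axis 1).2
  have hb : (b : ℝ) = 1 := axis_snd_coe (by norm_num)
  set h : ℝ → ℝ := fun x ↦ (G (x, b)).1 with hdef
  have hG : ∀ x, G (x, b) = (h x, b) := fun x ↦
    Prod.ext rfl (Subtype.ext ((hbot (x, b) hb).trans hb.symm))
  have hcont : Continuous h := continuous_fst.comp (G.continuous.comp (by fun_prop))
  have hinj : Function.Injective h := fun x y hxy ↦ by
    have : G (x, b) = G (y, b) := by rw [hG, hG, hxy]
    simpa using G.injective this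
  have hmono : StrictMono h := by
    refine (hcont.strictMono_of_inj hinj).resolve_right fun hanti ↦ ?_
    have h1 : h 1 = h 0 + 1 := by
      have := commute_zpow_apply hT 1 (0, b)
      rw [zpow_one, shift_apply, shift_apply] at this
      simpa [hG] using congrArg Prod.fst this
    linarith [hanti (zero_lt_one (α := ℝ))]
  have haxis : axis 1 = (0, b) := rfl
  have hpow : ∀ n : ℕ, (G ^ n) (axis 1) = (h^[n] 0, b) := by
    intro n
    induction n with
    | zero => rfl
    | succ n ih => rw [pow_succ', Homeomorph.mul_apply, ih, hG, Function.iterate_succ_apply']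
  simp only [SignStable, one_mul, hpow]
  rcases lt_trichotomy (h 0) 0 with h0 | h0 | h0
  · refine Or.inl (Or.inr fun n hn ↦ ?_)
    induction n, hn using Nat.le_induction with
    | base => exact h0
    | succ n hn ih =>
      rw [Function.iterate_succ_apply']
      exact (hmono ih).trans h0
  · exact Or.inr (by rw [haxis, hG, h0])
  · refine Or.inl (Or.inl fun n hn ↦ ?_)
    induction n, hn using Nat.le_induction with
    | base => exact h0
    | succ n hn ih =>
      rw [Function.iterate_succ_apply']
      exact h0.trans (hmono ih)

/-- A recurrent reversible homeomorphism lifted from the annulus and with a point lifting a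
periodic point has infinitely many returns to the translates of the axis. -/
lemma Reversible.false_of_intReturns_finite {F : Strip ≃ₜ Strip} (hF : Reversible F)
    (hT : Commute F shift) (hbot : ∀ u : Strip, (u.2 : ℝ) = 1 → ((F u).2 : ℝ) = 1)
    (hfin : (intReturns F).Finite) {z : Strip} {q : ℕ} (hq : 1 ≤ q) {p : ℤ}
    (hz : (F ^ q) z = (shift ^ p) z)
    (hrec : ∀ N : ℕ, 1 ≤ N → ∀ C : Set Strip, IsOpen C → C.Nonempty →
      ∃ w ∈ C, ∃ᶠ n : ℕ in atTop, ∃ k : ℤ, (shift ^ k) ((F ^ (N * n)) w) ∈ C) : False := by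
  set G : Strip ≃ₜ Strip := shift ^ (-p) * F ^ q with hGdef
  have hTq : Commute (F ^ q) shift := hT.pow_left q
  have hGT : Commute G shift := ((Commute.refl shift).zpow_left _).mul_left hTq
  have hGz : G z = z := by
    rw [hGdef, Homeomorph.mul_apply, hz, ← Homeomorph.mul_apply, ← zpow_add]
    simp
  have hpow : ∀ n : ℕ, G ^ n = shift ^ (-p * n) * F ^ (q * n) := fun n ↦ by
    rw [hGdef, ((hTq.zpow_right (-p)).symm).mul_pow, ← pow_mul, zpow_mul, zpow_natCast]
  have hGrev : Reversible G := by
    have h1 : mirror * F ^ q * mirror = (F ^ q)⁻¹ := hF.pow q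
    rw [Reversible, hGdef, ← mul_assoc, mirror_mul_shift_zpow, mul_assoc, mul_assoc,
      ← mul_assoc mirror, h1, mul_inv_rev, neg_neg, ← zpow_neg, neg_neg]
    exact ((hTq.inv_left).zpow_right p).symm.eq
  have hGfin : (intReturns G).Finite := by
    refine hfin.subset ?_
    rintro y ⟨hy, n, hn, k, h⟩
    refine ⟨hy, q * n, Nat.mul_pos hq hn, k + p * n, ?_⟩
    rw [hpow, Homeomorph.mul_apply, shift_zpow_apply] at h
    push_cast at h ⊢
    linarith
  have hGbot : ∀ u : Strip, (u.2 : ℝ) = 1 → ((G u).2 : ℝ) = 1 := by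
    intro u hu
    rw [hGdef, Homeomorph.mul_apply, shift_zpow_apply]
    have : ∀ n : ℕ, (((F ^ n) u).2 : ℝ) = 1 := by
      intro n
      induction n with
      | zero => exact hu
      | succ n ih => rw [pow_succ', Homeomorph.mul_apply]; exact hbot _ ih
    exact this q
  obtain ⟨B, hB⟩ := hGrev.exists_abs_pow_fst_sub_le hGT hGfin hGz
  refine hGrev.false_of_returns_finite (hGfin.subset (returns_subset_intReturns G))
    (signStable_one_or_fixed hGT hGbot) fun N hN C hC hne ↦
      exists_pow_mem_of_bounded hGT hB hN (fun C hC hne ↦ ?_) hC hne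
  obtain ⟨w, hw, hfreq⟩ := hrec (q * N) (Nat.mul_pos hq hN) C hC hne
  refine ⟨w, hw, hfreq.mono ?_⟩
  rintro n ⟨k, hk⟩
  refine ⟨k + p * (N * n : ℕ), ?_⟩
  rwa [hpow, Homeomorph.mul_apply, ← Homeomorph.mul_apply, ← zpow_add, ← mul_assoc,
    show k + p * ((N * n : ℕ) : ℤ) + -p * ((N * n : ℕ) : ℤ) = k by ring]

/-! ### Logarithms and invariance of the boundary -/

lemma _root_.PreconnectedSpace.eq_of_forall_exists_int {X : Type*} [TopologicalSpace X]
    [PreconnectedSpace X] {φ : X → ℝ} (hφ : Continuous φ) (hint : ∀ x, ∃ k : ℤ, φ x = k)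
    (x y : X) : φ x = φ y := by
  have hd : IsDiscrete (range ((↑) : ℤ → ℝ)) := by
    rw [isDiscrete_iff_discreteTopology]
    exact Int.isClosedEmbedding_coe_real.isEmbedding.toHomeomorph.symm.isEmbedding.discreteTopology
  exact isPreconnected_univ.constant_of_mapsTo hd hφ.continuousOn
    (fun x _ ↦ (hint x).imp fun _ h ↦ h.symm) (mem_univ x) (mem_univ y)

/-- The point at time `t` of the segment from `c` to `u`. -/
def segmentPoint (c : Strip) (t : unitInterval) (u : Strip) : Strip :=
  ((1 - t) * c.1 + t * u.1, projIcc 1 2 one_le_two ((1 - t) * c.2 + t * u.2))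

lemma segmentPoint_snd (c : Strip) (t : unitInterval) (u : Strip) :
    ((segmentPoint c t u).2 : ℝ) = (1 - t) * c.2 + t * u.2 := by
  have h : (1 - t) * (c.2 : ℝ) + t * u.2 ∈ Icc (1 : ℝ) 2 :=
    (convex_Icc 1 2) c.2.2 u.2.2 (sub_nonneg.2 t.2.2) t.2.1 (by ring)
  simp only [segmentPoint, projIcc_of_mem _ h]

lemma segmentPoint_zero (c u : Strip) : segmentPoint c 0 u = c := by
  ext <;> simp [segmentPoint]

lemma segmentPoint_one (c u : Strip) : segmentPoint c 1 u = u := by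
  ext <;> simp [segmentPoint]

lemma continuous_segmentPoint (c : Strip) :
    Continuous fun p : unitInterval × Strip ↦ segmentPoint c p.1 p.2 := by
  unfold segmentPoint
  fun_prop

/-- A nonvanishing continuous function on a star-shaped subset of the strip has a continuous
logarithm. -/
lemma exists_continuous_log {s : Set Strip} (c : s)
    (hs : ∀ t, ∀ u ∈ s, segmentPoint c t u ∈ s) {φ : s → ℂ} (hφ : Continuous φ)
    (h0 : ∀ u, φ u ≠ 0) : ∃ L : s → ℂ, Continuous L ∧ ∀ u, Complex.exp (L u) = φ u := by
  let H : C(unitInterval × s, {z : ℂ // z ≠ 0}) :=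
    ⟨fun p ↦ ⟨φ ⟨segmentPoint c p.1 p.2, hs _ _ p.2.2⟩, h0 _⟩, by
      refine Continuous.subtype_mk (hφ.comp (Continuous.subtype_mk ?_ _)) _
      exact (continuous_segmentPoint c).comp (by fun_prop : Continuous fun p : unitInterval × s ↦
        (p.1, (p.2 : Strip)))⟩
  let f : C(s, ℂ) := ContinuousMap.const s (Complex.log (φ c))
  have H_0 : ∀ u, H (0, u) = (⟨_, (f u).exp_ne_zero⟩ : {z : ℂ // z ≠ 0}) := fun u ↦ by
    apply Subtype.ext
    simp [H, f, segmentPoint_zero, Complex.exp_log (h0 c)]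
  have hlift := Complex.isCoveringMap_exp.liftHomotopy_lifts H f H_0
  set L := Complex.isCoveringMap_exp.liftHomotopy H f H_0
  refine ⟨fun u ↦ L (1, u), by fun_prop, fun u ↦ ?_⟩
  have := congrArg Subtype.val (congrFun hlift (1, u))
  simpa [H, segmentPoint_one] using this

/-- Homeomorphisms of the strip preserve its boundary. -/
lemma map_boundary (Φ : Strip ≃ₜ Strip) {z : Strip} (hz : (z.2 : ℝ) = 1 ∨ (z.2 : ℝ) = 2) :
    ((Φ z).2 : ℝ) = 1 ∨ ((Φ z).2 : ℝ) = 2 := by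
  by_contra! hw
  set w := Φ z with hwdef
  have hw1 : 1 < (w.2 : ℝ) := w.2.2.1.lt_of_ne' hw.1
  have hw2 : (w.2 : ℝ) < 2 := w.2.2.2.lt_of_ne hw.2
  let c : ({z}ᶜ : Set Strip) := ⟨(z.1, ⟨3 / 2, by norm_num⟩), fun h ↦ by
    have h' : (3 / 2 : ℝ) = z.2 := congrArg (fun u : Strip ↦ (u.2 : ℝ)) h
    rcases hz with hz | hz <;> rw [hz] at h' <;> norm_num at h'⟩
  have hs : ∀ t, ∀ u ∈ ({z}ᶜ : Set Strip), segmentPoint c t u ∈ ({z}ᶜ : Set Strip) := by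
    intro t u hu h
    rw [mem_singleton_iff] at h
    have h2 := segmentPoint_snd c t u
    rw [h] at h2
    have hc : (((c : Strip).2 : Icc (1 : ℝ) 2) : ℝ) = 3 / 2 := rfl
    rw [hc] at h2
    have ht : t = 1 := by
      have ht0 := t.2.1
      have ht1 := t.2.2
      have hu1 := u.2.2.1
      have hu2 := u.2.2.2
      apply Subtype.ext
      change (t : ℝ) = 1
      rcases hz with hz | hz <;> rw [hz] at h2 <;> nlinarith
    rw [ht, segmentPoint_one] at h
    exact hu h
  let emb : Strip → ℂ := fun u ↦ ⟨u.1, u.2⟩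
  have hemb : Continuous emb := by
    have : emb = fun u ↦ (u.1 : ℂ) + (u.2 : ℝ) * Complex.I := by
      funext u
      apply Complex.ext <;> simp [emb]
    rw [this]
    fun_prop
  have hinj : Function.Injective emb := fun u v h ↦
    Prod.ext (congrArg Complex.re h) (Subtype.ext (congrArg Complex.im h))
  obtain ⟨L, hL, hexp⟩ := exists_continuous_log c hs (φ := fun u ↦ emb (Φ u) - emb w)
    (by have := Φ.continuous; fun_prop)
    fun u h ↦ u.2 (Φ.injective (hinj (sub_eq_zero.1 h)))
  obtain ⟨η, hη, hη1, hη2⟩ : ∃ η : ℝ, 0 < η ∧ 1 < w.2 - η ∧ w.2 + η < 2 := by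
    refine ⟨min ((w.2 : ℝ) - 1) (2 - w.2) / 2, by
      have : 0 < min ((w.2 : ℝ) - 1) (2 - w.2) := lt_min (by linarith) (by linarith)
      positivity, ?_, ?_⟩
    · linarith [min_le_left ((w.2 : ℝ) - 1) (2 - w.2)]
    · linarith [min_le_right ((w.2 : ℝ) - 1) (2 - w.2)]
  let loop : ℝ → Strip := fun θ ↦
    (w.1 + η * Real.cos θ, projIcc 1 2 one_le_two (w.2 + η * Real.sin θ))
  have hloop : ∀ θ, emb (loop θ) - emb w = η * Complex.exp (θ * Complex.I) := by
    intro θ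
    have h : (w.2 : ℝ) + η * Real.sin θ ∈ Icc (1 : ℝ) 2 := by
      constructor <;> nlinarith [Real.neg_one_le_sin θ, Real.sin_le_one θ]
    apply Complex.ext
    · simp [emb, loop, Complex.exp_ofReal_mul_I_re]
    · simp [emb, loop, Complex.exp_ofReal_mul_I_im, projIcc_of_mem _ h]
  have hne : ∀ θ, Φ⁻¹ (loop θ) ∈ ({z}ᶜ : Set Strip) := by
    intro θ h
    have h1 : loop θ = w := by
      rw [hwdef, ← mem_singleton_iff.1 h, apply_inv_self]
    have h2 := hloop θ
    rw [h1, sub_self, eq_comm, mul_eq_zero] at h2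
    rcases h2 with h2 | h2
    · exact hη.ne' (by exact_mod_cast h2)
    · exact Complex.exp_ne_zero _ h2
  let ψ : ℝ → ℂ := fun θ ↦ L ⟨Φ⁻¹ (loop θ), hne θ⟩
  have hψ : Continuous ψ := hL.comp (Continuous.subtype_mk
    ((Φ⁻¹).continuous.comp (by fun_prop)) _)
  have hψexp : ∀ θ : ℝ, ∃ k : ℤ, ((ψ θ).im - θ) / (2 * Real.pi) = k := by
    intro θ
    have h1 : Complex.exp (ψ θ) = Complex.exp (Real.log η + θ * Complex.I) := by
      rw [hexp, Complex.exp_add, ← Complex.ofReal_exp, Real.exp_log hη, ← hloop]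
      simp only [apply_inv_self]
    obtain ⟨k, hk⟩ := Complex.exp_eq_exp_iff_exists_int.1 h1
    refine ⟨k, ?_⟩
    have h2 := congrArg Complex.im hk
    simp at h2
    rw [h2]
    field_simp
    ring
  have hconst := PreconnectedSpace.eq_of_forall_exists_int
    (by fun_prop : Continuous fun θ ↦ ((ψ θ).im - θ) / (2 * Real.pi)) hψexp 0 (2 * Real.pi)
  have hper : ψ 0 = ψ (2 * Real.pi) := by simp [ψ, loop]
  rw [hper, div_left_inj' (by positivity)] at hconst
  linarith [Real.pi_pos]

/-- The square of a homeomorphism of the strip preserves each boundary component. -/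
lemma map_map_bot (Φ : Strip ≃ₜ Strip) {u : Strip} (hu : (u.2 : ℝ) = 1) :
    ((Φ (Φ u)).2 : ℝ) = 1 := by
  have hconst : ∀ (a b : Strip), a.2 = b.2 → ((a.2 : ℝ) = 1 ∨ (a.2 : ℝ) = 2) →
      (Φ a).2 = (Φ b).2 := by
    intro a b hab ha
    have hint : ∀ x : ℝ, ∃ k : ℤ, (((Φ (x, a.2)).2 : Icc (1 : ℝ) 2) : ℝ) = k := fun x ↦ by
      rcases map_boundary Φ (z := (x, a.2)) ha with h | h
      · exact ⟨1, by simpa using h⟩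
      · exact ⟨2, by simpa using h⟩
    have hcont : Continuous fun x : ℝ ↦ (((Φ (x, a.2)).2 : Icc (1 : ℝ) 2) : ℝ) := by
      have := Φ.continuous
      fun_prop
    have h := PreconnectedSpace.eq_of_forall_exists_int hcont hint a.1 b.1
    have hb : ((b.1, a.2) : Strip) = b := by rw [hab]
    rw [hb] at h
    exact Subtype.ext h
  rcases map_boundary Φ (Or.inl hu) with h1 | h1
  · rw [hconst (Φ u) u (Subtype.ext (h1.trans hu.symm)) (Or.inl h1), h1]
  refine (map_boundary Φ (Or.inr h1)).resolve_right fun h2 ↦ ?_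
  have h3 := map_boundary Φ⁻¹ (Or.inl hu)
  have h4 : (Φ (Φ⁻¹ u)).2 = u.2 := by rw [apply_inv_self]
  rcases h3 with h | h
  · rw [hconst _ u (Subtype.ext (h.trans hu.symm)) (Or.inl h)] at h4
    rw [h4, hu] at h1
    norm_num at h1
  · rw [hconst _ (Φ u) (Subtype.ext (h.trans h1.symm)) (Or.inr h)] at h4
    rw [h4, hu] at h2
    norm_num at h2

/-! ### The covering of the annulus by the strip -/

/-- A point of the plane seen as a complex number, with the axis of the reflection as the real
axis. -/
def toComplex (p : ℝ × ℝ) : ℂ := ⟨p.2, p.1⟩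

lemma toComplex_injective : Function.Injective toComplex := fun _ _ h ↦
  Prod.ext (congrArg Complex.im h) (congrArg Complex.re h)

lemma continuous_toComplex : Continuous toComplex := by
  have : toComplex = fun p ↦ (p.2 : ℂ) + p.1 * Complex.I := by
    funext p
    apply Complex.ext <;> simp [toComplex]
  rw [this]
  fun_prop

lemma norm_toComplex (p : ℝ × ℝ) : ‖toComplex p‖ = enorm2 p := by
  rw [Complex.norm_def, Complex.normSq_apply, enorm2, toComplex]
  congr 1
  ring

lemma toComplex_ne_zero (a : annulus) : toComplex a ≠ 0 := by
  rw [← norm_pos_iff, norm_toComplex]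
  exact one_pos.trans_le a.2.1

/-- The modulus of a point of the annulus. -/
def modulus (a : annulus) : Icc (1 : ℝ) 2 := ⟨‖toComplex a‖, by
  rw [norm_toComplex]; exact a.2⟩

lemma continuous_modulus : Continuous modulus :=
  (continuous_toComplex.comp continuous_subtype_val).norm.subtype_mk _

/-- Polar coordinates in the plane, the angle being measured in turns from the axis of the
reflection. -/
def polar (u : Strip) : ℝ × ℝ :=
  (u.2 * Real.sin (2 * Real.pi * u.1), u.2 * Real.cos (2 * Real.pi * u.1))

lemma toComplex_polar (u : Strip) :
    toComplex (polar u) = (u.2 : ℝ) * Complex.exp ((2 * Real.pi * u.1 : ℝ) * Complex.I) := by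
  apply Complex.ext
  · rw [Complex.re_ofReal_mul, Complex.exp_ofReal_mul_I_re]
    rfl
  · rw [Complex.im_ofReal_mul, Complex.exp_ofReal_mul_I_im]
    rfl

lemma enorm2_polar (u : Strip) : enorm2 (polar u) = u.2 := by
  rw [← norm_toComplex, toComplex_polar, norm_mul, Complex.norm_exp_ofReal_mul_I, mul_one,
    Complex.norm_real, Real.norm_of_nonneg (zero_le_one.trans u.2.2.1)]

/-- The covering map from the strip to the annulus. -/
def proj (u : Strip) : annulus := ⟨polar u, by
  change 1 ≤ enorm2 (polar u) ∧ enorm2 (polar u) ≤ 2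
  rw [enorm2_polar]
  exact u.2.2⟩

lemma coe_proj (u : Strip) : (proj u : ℝ × ℝ) = polar u := rfl

lemma continuous_proj : Continuous proj := by
  refine Continuous.subtype_mk ?_ _
  unfold polar
  fun_prop

lemma modulus_proj (u : Strip) : modulus (proj u) = u.2 :=
  Subtype.ext ((norm_toComplex _).trans (enorm2_polar u))

lemma proj_mirror (u : Strip) : proj (mirror u) = IA (proj u) := by
  apply Subtype.ext
  simp [proj, polar, IA, refl2]

lemma proj_eq_of_exp {a : annulus} {ℓ : ℂ} (h : Complex.exp ℓ = toComplex a) :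
    proj (ℓ.im / (2 * Real.pi), modulus a) = a := by
  apply Subtype.ext
  apply toComplex_injective
  rw [coe_proj, toComplex_polar, ← h]
  have h1 : ((modulus a : ℝ) : ℂ) = Complex.exp ℓ.re := by
    rw [modulus, ← Complex.ofReal_exp, ← Complex.norm_exp, h]
  dsimp only
  rw [h1, ← Complex.exp_add, mul_div_cancel₀ _ (by positivity), Complex.re_add_im]

lemma proj_surjective : Function.Surjective proj := fun a ↦
  ⟨_, proj_eq_of_exp (Complex.exp_log (toComplex_ne_zero a))⟩

lemma proj_shift_zpow (k : ℤ) (u : Strip) : proj ((shift ^ k) u) = proj u := by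
  apply Subtype.ext
  rw [coe_proj, coe_proj, polar, polar, shift_zpow_apply]
  dsimp only
  rw [show 2 * Real.pi * (u.1 + k) = 2 * Real.pi * u.1 + k * (2 * Real.pi) by ring,
    Real.sin_add_int_mul_two_pi, Real.cos_add_int_mul_two_pi]

lemma exists_shift_of_proj_eq {u v : Strip} (h : proj u = proj v) :
    ∃ k : ℤ, u = (shift ^ k) v := by
  have h2 : u.2 = v.2 := by rw [← modulus_proj, h, modulus_proj]
  have h3 : toComplex (polar u) = toComplex (polar v) := congrArg (fun a : annulus ↦ toComplex a) h
  rw [toComplex_polar, toComplex_polar, h2] at h3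
  have hv : ((v.2 : ℝ) : ℂ) ≠ 0 := by
    exact_mod_cast (one_pos.trans_le v.2.2.1).ne'
  obtain ⟨k, hk⟩ := Complex.exp_eq_exp_iff_exists_int.1 (mul_left_cancel₀ hv h3)
  refine ⟨k, Prod.ext ?_ ?_⟩
  · have h4 := congrArg Complex.im hk
    rw [shift_zpow_apply]
    simp at h4
    have h5 : 2 * Real.pi * u.1 = 2 * Real.pi * (v.1 + k) := by rw [h4]; ring
    exact mul_left_cancel₀ (by positivity) h5
  · rw [shift_zpow_apply, h2]

/-- The covering map is open. -/
lemma eventually_exists_proj_eq {C : Set Strip} (hC : IsOpen C) {c : Strip} (hc : c ∈ C) :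
    ∀ᶠ a in 𝓝 (proj c), ∃ u ∈ C, proj u = a := by
  set ρ : ℂ := ((2 * Real.pi * c.1 : ℝ) : ℂ) * Complex.I with hρ
  set ℓ : annulus → ℂ := fun a ↦ Complex.log (toComplex a * Complex.exp (-ρ)) + ρ with hℓ
  have hexp : ∀ a, Complex.exp (ℓ a) = toComplex a := fun a ↦ by
    rw [hℓ, Complex.exp_add, Complex.exp_log (mul_ne_zero (toComplex_ne_zero a)
      (Complex.exp_ne_zero _)), mul_assoc, ← Complex.exp_add, neg_add_cancel, Complex.exp_zero,
      mul_one]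
  have hval : toComplex (proj c) * Complex.exp (-ρ) = (c.2 : ℝ) := by
    rw [coe_proj, toComplex_polar, mul_assoc, ← Complex.exp_add, add_neg_cancel, Complex.exp_zero,
      mul_one]
  have hpos : 0 < (c.2 : ℝ) := one_pos.trans_le c.2.2.1
  have hcont : ContinuousAt ℓ (proj c) := by
    refine ContinuousAt.add (ContinuousAt.clog ?_ ?_) continuousAt_const
    · exact ((continuous_toComplex.comp continuous_subtype_val).mul continuous_const).continuousAt
    · rw [hval]
      exact Complex.ofReal_mem_slitPlane.2 hpos
  have hs : ContinuousAt (fun a ↦ ((ℓ a).im / (2 * Real.pi), modulus a)) (proj c) :=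
    ((Complex.continuous_im.continuousAt.comp hcont).div_const _).prodMk
      continuous_modulus.continuousAt
  have hsc : ((ℓ (proj c)).im / (2 * Real.pi), modulus (proj c)) = c := by
    rw [modulus_proj]
    refine Prod.ext ?_ rfl
    have : (ℓ (proj c)).im = 2 * Real.pi * c.1 := by
      simp only [hℓ, hval]
      rw [Complex.add_im, ← Complex.ofReal_log hpos.le, Complex.ofReal_im, hρ,
        Complex.im_ofReal_mul]
      simp
    dsimp only
    rw [this, mul_div_cancel_left₀ _ (by positivity)]
  have hmem := hs.eventually_mem (s := C) (by rw [hsc]; exact hC.mem_nhds hc)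
  filter_upwards [hmem] with a ha
  exact ⟨_, ha, proj_eq_of_exp (hexp a)⟩

lemma exists_lift {φ : Strip → annulus} (hφ : Continuous φ) :
    ∃ Φ : Strip → Strip, Continuous Φ ∧ ∀ u, proj (Φ u) = φ u := by
  obtain ⟨L, hL, hexp⟩ := exists_continuous_log (s := univ) ⟨axis 1, mem_univ _⟩
    (fun _ _ _ ↦ mem_univ _) (φ := fun u ↦ toComplex (φ u))
    (continuous_toComplex.comp (continuous_subtype_val.comp (hφ.comp continuous_subtype_val)))
    (fun u ↦ toComplex_ne_zero _)
  refine ⟨fun u ↦ ((L ⟨u, mem_univ u⟩).im / (2 * Real.pi), modulus (φ u)), ?_, fun u ↦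
    proj_eq_of_exp (hexp ⟨u, mem_univ u⟩)⟩
  have := continuous_modulus.comp hφ
  refine Continuous.prodMk ?_ this
  fun_prop

lemma exists_eq_shift_of_lifts {Φ Ψ : Strip → Strip} (hΦ : Continuous Φ) (hΨ : Continuous Ψ)
    (h : ∀ u, proj (Φ u) = proj (Ψ u)) : ∃ k : ℤ, ∀ u, Φ u = (shift ^ k) (Ψ u) := by
  choose k hk using fun u ↦ exists_shift_of_proj_eq (h u)
  have hint : ∀ u, (Φ u).1 - (Ψ u).1 = k u := fun u ↦ by
    rw [hk u, shift_zpow_apply]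
    simp
  refine ⟨k (axis 1), fun u ↦ ?_⟩
  have : PreconnectedSpace (Icc (1 : ℝ) 2) := Subtype.preconnectedSpace isPreconnected_Icc
  have := PreconnectedSpace.eq_of_forall_exists_int
    (by fun_prop : Continuous fun u ↦ (Φ u).1 - (Ψ u).1) (fun u ↦ ⟨k u, hint u⟩) u (axis 1)
  rw [hint, hint] at this
  rw [← Int.cast_injective this]
  exact hk u

lemma exists_eq_shift_mul_of_lifts {Φ Ψ : Strip ≃ₜ Strip} (h : ∀ u, proj (Φ u) = proj (Ψ u)) :
    ∃ k : ℤ, Φ = shift ^ k * Ψ := by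
  obtain ⟨k, hk⟩ := exists_eq_shift_of_lifts Φ.continuous Ψ.continuous h
  exact ⟨k, Homeomorph.ext hk⟩

lemma IA_IA (a : annulus) : IA (IA a) = a := by
  apply Subtype.ext
  simp [IA, refl2]

/-- A reversible homeomorphism of the annulus lifts to a homeomorphism of the strip. -/
lemma exists_homeomorph_lift (f : annulus ≃ₜ annulus)
    (hrev : ∀ z : annulus, f (IA z) = IA (f.symm z)) :
    ∃ Φ : Strip ≃ₜ Strip, ∀ u, proj (Φ u) = f (proj u) := by
  obtain ⟨Φ, hΦ, hlift⟩ := exists_lift (f.continuous.comp continuous_proj)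
  simp only [Function.comp_apply] at hlift
  have hm := mirror.continuous
  have h1 : ∀ u, proj (Φ (mirror (Φ (mirror u)))) = proj u := fun u ↦ by
    rw [hlift, proj_mirror, hlift, proj_mirror, hrev (proj u), IA_IA, f.apply_symm_apply]
  have h2 : ∀ u, proj (mirror (Φ (mirror (Φ u)))) = proj u := fun u ↦ by
    rw [proj_mirror, hlift, proj_mirror, hlift, hrev, f.symm_apply_apply, IA_IA]
  obtain ⟨m, hm1⟩ := exists_eq_shift_of_lifts (by fun_prop) continuous_id h1
  obtain ⟨m', hm2⟩ := exists_eq_shift_of_lifts (by fun_prop) continuous_id h2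
  simp only [id] at hm1 hm2
  have hinj : Function.Injective Φ := fun u v huv ↦ by
    apply (shift ^ m').injective
    rw [← hm2, ← hm2, huv]
  have hright : Function.RightInverse (fun u ↦ mirror (Φ (mirror ((shift ^ (-m)) u)))) Φ :=
    fun u ↦ by
      rw [hm1, ← Homeomorph.mul_apply, ← zpow_add]
      simp
  have hs := (shift ^ (-m)).continuous
  exact ⟨{
    toFun := Φ
    invFun := fun u ↦ mirror (Φ (mirror ((shift ^ (-m)) u)))
    left_inv := fun u ↦ hinj (hright (Φ u))
    right_inv := hright
    continuous_toFun := hΦ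
    continuous_invFun := by fun_prop }, hlift⟩

/-- The square of a lift of a reversible homeomorphism of the annulus is reversible and commutes
with the deck transformations. -/
lemma reversible_and_commute_of_lift {f : annulus ≃ₜ annulus}
    (hrev : ∀ z : annulus, f (IA z) = IA (f.symm z)) {Φ : Strip ≃ₜ Strip}
    (hΦ : ∀ u, proj (Φ u) = f (proj u)) : Reversible (Φ ^ 2) ∧ Commute (Φ ^ 2) shift := by
  have hshift : ∀ u, proj (shift u) = proj u := fun u ↦ by
    simpa using proj_shift_zpow 1 u
  have hinv : ∀ u, proj (Φ⁻¹ u) = f.symm (proj u) := fun u ↦ by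
    rw [f.eq_symm_apply, ← hΦ, apply_inv_self]
  obtain ⟨e, he⟩ : ∃ e : ℤ, Φ * shift = shift ^ e * Φ := exists_eq_shift_mul_of_lifts fun u ↦ by
    rw [Homeomorph.mul_apply, hΦ, hΦ, hshift]
  obtain ⟨e', he'⟩ : ∃ e : ℤ, Φ⁻¹ * shift = shift ^ e * Φ⁻¹ :=
    exists_eq_shift_mul_of_lifts fun u ↦ by
      rw [Homeomorph.mul_apply, hinv, hinv, hshift]
  obtain ⟨m, hm⟩ : ∃ m : ℤ, mirror * Φ * mirror = shift ^ m * Φ⁻¹ :=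
    exists_eq_shift_mul_of_lifts fun u ↦ by
      rw [Homeomorph.mul_apply, Homeomorph.mul_apply, hinv, proj_mirror, hΦ, proj_mirror, hrev,
        IA_IA]
  have hconj : ∀ k : ℤ, Φ * shift ^ k = shift ^ (e * k) * Φ := fun k ↦ by
    have h1 : Φ * shift * Φ⁻¹ = shift ^ e := by rw [he, mul_inv_cancel_right]
    rw [zpow_mul, ← h1, conj_zpow, inv_mul_cancel_right]
  have hconj' : ∀ k : ℤ, Φ⁻¹ * shift ^ k = shift ^ (e' * k) * Φ⁻¹ := fun k ↦ by
    have h1 : Φ⁻¹ * shift * Φ = shift ^ e' := by rw [he', inv_mul_cancel_right]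
    have h2 : Φ⁻¹ * shift * Φ⁻¹⁻¹ = shift ^ e' := by rw [inv_inv, h1]
    rw [zpow_mul, ← h2, conj_zpow, inv_mul_cancel_right]
  have hee' : e * e' = 1 := by
    have h1 : shift ^ (e * e') = shift ^ (1 : ℤ) := by
      have h2 := hconj e'
      rw [← mul_inv_eq_iff_eq_mul, mul_assoc, ← he', ← mul_assoc, mul_inv_cancel, one_mul] at h2
      rw [← h2, zpow_one]
    have h3 := congrArg (fun G : Strip ≃ₜ Strip ↦ (G (axis 1)).1) h1
    simp only [shift_zpow_apply, axis_fst, zero_add] at h3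
    exact_mod_cast h3
  have heq : e = e' := by
    rcases Int.mul_eq_one_iff_eq_one_or_neg_one.1 hee' with h | h <;> rw [h.1, h.2]
  have hmm : shift ^ (m + e * m) = 1 := by
    have h1 : Φ = mirror * (shift ^ m * Φ⁻¹) * mirror := by
      rw [← hm]
      simp only [← mul_assoc, mirror_mul_mirror, one_mul]
      rw [mul_assoc, mirror_mul_mirror, mul_one]
    have h2 : mirror * Φ⁻¹ * mirror = Φ * shift ^ (-m) := by
      have := congrArg (·⁻¹) hm
      simp only [mul_inv_rev, mirror_inv, inv_inv, ← zpow_neg, ← mul_assoc] at this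
      exact this
    rw [← mul_assoc, mirror_mul_shift_zpow, mul_assoc, mul_assoc, ← mul_assoc mirror, h2,
      hconj, ← mul_assoc, ← zpow_add] at h1
    have h3 : shift ^ (-m + e * -m) = 1 := by
      simpa using h1.symm
    rw [show m + e * m = -(-m + e * -m) by ring, zpow_neg, h3, inv_one]
  constructor
  · rw [Reversible, sq]
    calc mirror * (Φ * Φ) * mirror = (mirror * Φ * mirror) * (mirror * Φ * mirror) := by
          simp only [mul_assoc]
          rw [← mul_assoc mirror mirror, mirror_mul_mirror, one_mul]
      _ = shift ^ (m + e * m) * (Φ⁻¹ * Φ⁻¹) := by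
          rw [hm, mul_assoc, ← mul_assoc Φ⁻¹, hconj', ← heq, zpow_add]
          simp only [mul_assoc]
      _ = (Φ * Φ)⁻¹ := by rw [hmm, one_mul, mul_inv_rev]
  · rw [Commute, SemiconjBy, sq, mul_assoc, he, ← mul_assoc, hconj, mul_assoc]
    nth_rewrite 2 [heq]
    rw [hee', zpow_one]

/-! ### Area preserving reversible homeomorphisms of the annulus -/

lemma measurableSet_annulus : MeasurableSet annulus := by
  have h : Continuous enorm2 := by
    unfold enorm2
    fun_prop
  exact (isClosed_Icc.preimage h).measurableSet

lemma annulus_mem_nhds {p : ℝ × ℝ} (hp : p ∈ annulusInt) : annulus ∈ 𝓝 p := by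
  have h : Continuous enorm2 := by
    unfold enorm2
    fun_prop
  exact mem_of_superset ((isOpen_Ioo.preimage h).mem_nhds hp) fun _ hq ↦ ⟨hq.1.le, hq.2.le⟩

lemma volume_annulus_lt_top : volume annulus < ⊤ := by
  refine (measure_mono (t := Icc (-2 : ℝ) 2 ×ˢ Icc (-2 : ℝ) 2) fun p hp ↦ ?_).trans_lt
    (isCompact_Icc.prod isCompact_Icc).measure_lt_top
  have h1 : p.1 ^ 2 + p.2 ^ 2 ≤ 2 ^ 2 := (Real.sqrt_le_left zero_le_two).1 hp.2
  exact ⟨abs_le.1 (abs_le_of_sq_le_sq (by nlinarith [sq_nonneg p.2]) zero_le_two),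
    abs_le.1 (abs_le_of_sq_le_sq (by nlinarith [sq_nonneg p.1]) zero_le_two)⟩

lemma comap_volume_annulus_ne_zero {V : Set annulus} (hV : IsOpen V) {a : annulus} (ha : a ∈ V)
    (haint : (a : ℝ × ℝ) ∈ annulusInt) :
    (volume : Measure (ℝ × ℝ)).comap (Subtype.val : annulus → ℝ × ℝ) V ≠ 0 := by
  rw [(MeasurableEmbedding.subtype_coe measurableSet_annulus).comap_apply]
  refine (Measure.measure_pos_of_mem_nhds volume (x := (a : ℝ × ℝ)) ?_).ne'
  rw [← map_nhds_subtype_coe_eq_nhds a.2 (annulus_mem_nhds haint)]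
  exact image_mem_map (hV.mem_nhds ha)

/-- Poincaré recurrence for the square of a lift of an area preserving homeomorphism. -/
lemma exists_frequently_mem_of_lift {f : annulus ≃ₜ annulus}
    (harea : MeasurePreserving f
      ((volume : Measure (ℝ × ℝ)).comap (Subtype.val : annulus → ℝ × ℝ))
      ((volume : Measure (ℝ × ℝ)).comap (Subtype.val : annulus → ℝ × ℝ)))
    {F : Strip ≃ₜ Strip} (hF : ∀ n u, proj ((F ^ n) u) = f^[2 * n] (proj u)) (N : ℕ)
    {C : Set Strip} (hC : IsOpen C) (hne : C.Nonempty) :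
    ∃ w ∈ C, ∃ᶠ n : ℕ in atTop, ∃ k : ℤ, (shift ^ k) ((F ^ (N * n)) w) ∈ C := by
  obtain ⟨c₀, hc₀⟩ := hne
  have hpath : Continuous fun r : ℝ ↦ ((c₀.1, projIcc 1 2 one_le_two r) : Strip) := by fun_prop
  obtain ⟨r, hr, hrint⟩ := mem_closure_iff.1
    (show (c₀.2 : ℝ) ∈ closure (Ioo 1 2) by rw [closure_Ioo (by norm_num)]; exact c₀.2.2)
    _ (hC.preimage hpath) (by simpa using hc₀)
  set c : Strip := (c₀.1, projIcc 1 2 one_le_two r)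
  have hcr : (c.2 : ℝ) = r := by simp [c, projIcc_of_mem _ (Ioo_subset_Icc_self hrint)]
  have hcint : (proj c : ℝ × ℝ) ∈ annulusInt := by
    change 1 < enorm2 (polar c) ∧ enorm2 (polar c) < 2
    rw [enorm2_polar, hcr]
    exact hrint
  obtain ⟨V, hVsub, hV, hcV⟩ := mem_nhds_iff.1 (eventually_exists_proj_eq hC hr)
  have hfin : IsFiniteMeasure
      ((volume : Measure (ℝ × ℝ)).comap (Subtype.val : annulus → ℝ × ℝ)) := ⟨by
    rw [(MeasurableEmbedding.subtype_coe measurableSet_annulus).comap_apply, image_univ,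
      Subtype.range_coe]
    exact volume_annulus_lt_top⟩
  have hrec := (harea.iterate (2 * N)).conservative.ae_mem_imp_frequently_image_mem
    hV.measurableSet.nullMeasurableSet
  obtain ⟨a, haV, ha⟩ := ((frequently_ae_mem_iff.2
    (comap_volume_annulus_ne_zero hV hcV hcint)).and_eventually hrec).exists
  obtain ⟨w, hw, rfl⟩ := hVsub haV
  refine ⟨w, hw, (ha haV).mono fun n hn ↦ ?_⟩
  obtain ⟨u, hu, huw⟩ := hVsub hn
  rw [← Function.iterate_mul, mul_assoc, ← hF] at huw
  obtain ⟨k, rfl⟩ := exists_shift_of_proj_eq huw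
  exact ⟨k, hu⟩

/-- A return to a translate of the axis is a symmetric periodic point. -/
lemma symmetric_periodic_of_mem_intReturns {f : annulus ≃ₜ annulus}
    (hrev : ∀ z : annulus, f (IA z) = IA (f.symm z)) {F : Strip ≃ₜ Strip}
    (hF : ∀ n u, proj ((F ^ n) u) = f^[2 * n] (proj u)) {y : ℝ} (hy : y ∈ intReturns F) :
    ∃ k : ℕ, 1 ≤ k ∧ f^[k] (proj (axis y)) = proj (axis y) ∧
      f^[k] (proj (axis y)) = IA (proj (axis y)) := by
  obtain ⟨-, n, hn, k, hk⟩ := hy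
  have hIz : IA (proj (axis y)) = proj (axis y) := by rw [← proj_mirror, mirror_axis]
  have hIa : IA (f^[2 * n] (proj (axis y))) = f^[2 * n] (proj (axis y)) := by
    rw [← hF, ← proj_mirror, ← proj_shift_zpow (2 * k), shift_zpow_apply, mirror_apply, hk]
    congr 1
    refine Prod.ext ?_ rfl
    push_cast
    rw [hk]
    ring
  have hsemi : ∀ (m : ℕ) (a : annulus), f^[m] (IA a) = IA (f.symm^[m] a) := fun m a ↦
    ((Function.Semiconj.iterate_right (f := IA) (fun z ↦ (hrev z).symm) m) a).symm
  have hret : f^[2 * n + 2 * n] (proj (axis y)) = proj (axis y) := by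
    rw [Function.iterate_add_apply, ← hIa, hsemi,
      (Function.LeftInverse.iterate f.symm_apply_apply (2 * n)) (proj (axis y)), hIz]
  exact ⟨2 * n + 2 * n, by omega, hret, hret.trans hIz.symm⟩

end Strip

open Strip

/-- **Theorem 1.1 (Franks-like theorem for reversible maps).**
Every area preserving reversible homeomorphism of the closed annulus is either
periodic point free or has infinitely many interior symmetric periodic points. -/
theorem franks_like_dichotomy_closed_annulus
    (f : annulus ≃ₜ annulus)
    (hrev : ∀ z : annulus, f (IA z) = IA (f.symm z))
    (harea : MeasurePreserving f
      ((volume : Measure (ℝ × ℝ)).comap (Subtype.val : annulus → ℝ × ℝ))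
      ((volume : Measure (ℝ × ℝ)).comap (Subtype.val : annulus → ℝ × ℝ))) :
    (¬ ∃ (z : annulus) (k : ℕ), 1 ≤ k ∧ (⇑f)^[k] z = z) ∨
    {z : annulus | (z : ℝ × ℝ) ∈ annulusInt ∧
        (∃ k : ℕ, 1 ≤ k ∧ (⇑f)^[k] z = z) ∧
        (∃ l : ℕ, 1 ≤ l ∧ (⇑f)^[l] z = IA z)}.Infinite := by
  rw [or_iff_not_imp_right, not_infinite]
  rintro hfin ⟨z, q, hq, hz⟩
  obtain ⟨Φ, hΦ⟩ := exists_homeomorph_lift f hrev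
  obtain ⟨hFrev, hFT⟩ := reversible_and_commute_of_lift hrev hΦ
  have hpow : ∀ n u, proj ((Φ ^ n) u) = f^[n] (proj u) := by
    intro n u
    induction n with
    | zero => rfl
    | succ n ih => rw [pow_succ', Homeomorph.mul_apply, hΦ, ih, Function.iterate_succ_apply']
  have hF : ∀ n u, proj (((Φ ^ 2) ^ n) u) = f^[2 * n] (proj u) := fun n u ↦ by
    rw [← pow_mul, hpow]
  obtain ⟨u, rfl⟩ := proj_surjective z
  obtain ⟨p, hp⟩ : ∃ p : ℤ, ((Φ ^ 2) ^ q) u = (shift ^ p) u := exists_shift_of_proj_eq (by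
    rw [hF, two_mul, Function.iterate_add_apply, hz, hz])
  refine hFrev.false_of_intReturns_finite hFT (fun v hv ↦ ?_) ?_ hq hp
    fun N _ C hC hne ↦ exists_frequently_mem_of_lift harea hF N hC hne
  · rw [sq, Homeomorph.mul_apply]
    exact map_map_bot Φ hv
  · refine ((hfin.image fun a ↦ (modulus a : ℝ)).union (toFinite {1, 2})).subset fun y hy ↦ ?_
    by_cases hend : y = 1 ∨ y = 2
    · exact Or.inr hend
    push Not at hend
    obtain ⟨k, hk, hper, hsym⟩ := symmetric_periodic_of_mem_intReturns hrev hF hy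
    refine Or.inl ⟨proj (axis y), ⟨?_, ⟨k, hk, hper⟩, k, hk, hsym⟩, ?_⟩
    · change 1 < enorm2 (polar (axis y)) ∧ enorm2 (polar (axis y)) < 2
      rw [enorm2_polar, axis_snd_coe hy.1]
      exact ⟨hy.1.1.lt_of_ne' hend.1, hy.1.2.lt_of_ne hend.2⟩
    · dsimp only
      rw [modulus_proj, axis_snd_coe hy.1]
end
end

section
/- Let f : Å → Å be an area preserving reversible homeomorphism of the open annulus Å. Then either f has no periodic point at all (there is no z ∈ Å and integer k ≥ 1 with f^k(z) = z), or the set of symmetric periodic points of f (points z ∈ Å with f^k(z) = z and f^ℓ(z) = I(z) for some integers k, ℓ ≥ 1) is infinite. -/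
open MeasureTheory Set

noncomputable section

lemma refl2_mem_annulusInt {p : ℝ × ℝ} (h : p ∈ annulusInt) : refl2 p ∈ annulusInt := by
  simpa [annulusInt, enorm2_refl2] using h

/-- The restriction `I_Å` of the reflection to the open annulus. -/
def IAo : annulusInt → annulusInt := fun z => ⟨refl2 z, refl2_mem_annulusInt z.2⟩

open Topology

/-- The deck translation of the exponential covering of the punctured plane. -/
local notation "τ" => (2 * (Real.pi : ℂ) * Complex.I)

lemma im_add_int_mul_period (z : ℂ) (k : ℤ) : (z + k * τ).im = z.im + k * (2 * Real.pi) := by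
  simp

/-- A homeomorphism of the plane that commutes with the deck translations and moves the real axis
into the upper half plane maps the closed upper half plane into the open one. -/
lemma maps_upper_of_axis_upper {A B : ℂ → ℂ} (hB : Continuous B)
    (hAB : ∀ z, A (B z) = z) (hBA : ∀ z, B (A z) = z)
    (hBT : ∀ z (k : ℤ), B (z + k * τ) = B z + k * τ)
    (hV : ∀ z : ℂ, z.im = 0 → 0 < (A z).im) (z : ℂ) (hz : 0 ≤ z.im) : 0 < (A z).im := by
  have hL : IsPreconnected {w : ℂ | w.im ≤ 0} := (convex_halfSpace_im_le 0).isPreconnected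
  have hne : ∀ w : ℂ, w.im ≤ 0 → (B w).im ≠ 0 := fun w hw h0 => by
    have := hV _ h0
    rw [hAB] at this
    linarith
  have hneg : ∀ w : ℂ, w.im ≤ 0 → (B w).im < 0 := by
    by_contra! hcon
    obtain ⟨w, hw, hw0⟩ := hcon
    obtain ⟨N, hN⟩ := exists_nat_gt ((B 0).im / (2 * Real.pi))
    have hpi := Real.pi_pos
    rw [div_lt_iff₀ (by positivity)] at hN
    have hfar : ((0 : ℂ) + ((-(N : ℤ) : ℤ) : ℂ) * τ).im ≤ 0 := by
      rw [im_add_int_mul_period]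
      push_cast
      have : (0 : ℝ) ≤ N := N.cast_nonneg
      simp only [Complex.zero_im]
      nlinarith
    have hfar' : (B ((0 : ℂ) + ((-(N : ℤ) : ℤ) : ℂ) * τ)).im ≤ 0 := by
      rw [hBT, im_add_int_mul_period]
      push_cast
      linarith
    obtain ⟨v, hv, hv0⟩ := hL.intermediate_value (f := fun w => (B w).im) hfar hw
      (Complex.continuous_im.comp hB).continuousOn ⟨hfar', hw0⟩
    exact hne v hv hv0
  by_contra! hcon
  have := hneg _ hcon
  rw [hBA] at this
  linarith

/-- A homeomorphism of the plane that commutes with the deck translations and displaces the real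
axis off itself moves it consistently to one side. -/
lemma maps_halfPlane_of_axis_displaced {A B : ℂ → ℂ} (hA : Continuous A) (hB : Continuous B)
    (hAB : ∀ z, A (B z) = z) (hBA : ∀ z, B (A z) = z)
    (hBT : ∀ z (k : ℤ), B (z + k * τ) = B z + k * τ)
    (hV : ∀ z : ℂ, z.im = 0 → (A z).im ≠ 0) :
    (∀ z : ℂ, 0 ≤ z.im → 0 < (A z).im) ∨ (∀ z : ℂ, z.im ≤ 0 → (A z).im < 0) := by
  have hconn : IsPreconnected {w : ℂ | w.im = 0} :=
    (convex_hyperplane Complex.imLm.isLinear 0).isPreconnected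
  by_cases hpos : ∀ z : ℂ, z.im = 0 → 0 < (A z).im
  · exact .inl (maps_upper_of_axis_upper hB hAB hBA hBT hpos)
  · right
    push Not at hpos
    obtain ⟨u, hu, hu0⟩ := hpos
    have hneg : ∀ z : ℂ, z.im = 0 → (A z).im < 0 := by
      intro z hz
      by_contra! hcon
      obtain ⟨v, hv, hv0⟩ := hconn.intermediate_value (f := fun w => (A w).im) hu hz
        (Complex.continuous_im.comp hA).continuousOn ⟨hu0, hcon⟩
      exact hV v hv hv0
    intro z hz
    have key := maps_upper_of_axis_upper (A := fun w => star (A (star w)))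
      (B := fun w => star (B (star w)))
      (continuous_star.comp (hB.comp continuous_star)) (by simp [hAB]) (by simp [hBA])
      (fun w k => by
        have h := hBT (star w) (-k)
        have e : star (w + k * τ) = star w + ((-k : ℤ) : ℂ) * τ := by simp
        rw [e, h]
        simp)
      (fun w hw => by simpa using hneg (star w) (by simpa using hw)) (star z) (by simpa using hz)
    simpa using key

/-- A map that is nonwandering modulo deck translations cannot push the real axis upwards while
all iterates stay below the next translate of the axis. -/
lemma not_pushes_up {G : ℂ → ℂ} (hG : Continuous G)
    (hGT : ∀ z (k : ℤ), G (z + k * τ) = G z + k * τ)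
    (hNW : ∀ U : Set ℂ, IsOpen U → U.Nonempty →
      ∃ x ∈ U, ∃ m : ℕ, 1 ≤ m ∧ ∃ k : ℤ, G^[m] x + k * τ ∈ U)
    (hup : ∀ z : ℂ, 0 ≤ z.im → 0 < (G z).im)
    (hbd : ∀ n : ℕ, 1 ≤ n → ∀ z : ℂ, z.im ≤ 0 → (G^[n] z).im < 2 * Real.pi) : False := by
  have hpi := Real.pi_pos
  have hup' : ∀ n : ℕ, ∀ z : ℂ, 0 ≤ z.im → 0 ≤ (G^[n] z).im := by
    intro n
    induction n with
    | zero => exact fun z hz => hz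
    | succ n ih => exact fun z hz => ih _ (hup z hz).le
  obtain ⟨x, ⟨hx0, hx1⟩, m, hm, k, hy0, hy1⟩ := hNW {z | z.im < 0 ∧ 0 < (G z).im}
    ((isOpen_lt Complex.continuous_im continuous_const).inter
      (isOpen_lt continuous_const (Complex.continuous_im.comp hG))) (by
      have hopen : IsOpen {z : ℂ | 0 < (G z).im} :=
        isOpen_lt continuous_const (Complex.continuous_im.comp hG)
      obtain ⟨ε, hε, hball⟩ := Metric.isOpen_iff.1 hopen 0 (hup 0 (by simp))
      refine ⟨-((ε / 2 : ℝ) : ℂ) * Complex.I, ?_, hball ?_⟩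
      · simpa using hε
      · simp [abs_of_pos hε, hε])
  have hGm : 0 ≤ (G^[m] x).im := by
    obtain ⟨j, rfl⟩ := Nat.exists_eq_add_of_le' hm
    exact hup' j _ hx1.le
  rw [im_add_int_mul_period] at hy0
  have hk : k ≤ -1 := by
    by_contra! hk
    have : (0 : ℝ) ≤ k := by exact_mod_cast (by omega : (0 : ℤ) ≤ k)
    nlinarith
  rw [hGT, im_add_int_mul_period, ← Function.iterate_succ_apply' G] at hy1
  have hlt := hbd (m + 1) (by omega) x hx0.le
  have : (k : ℝ) ≤ -1 := by exact_mod_cast hk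
  nlinarith

/-- A homeomorphism of the plane commuting with the deck translations, nonwandering modulo them and
having a fixed point has an iterate moving some point of the real axis to a translate of it. -/
lemma exists_axis_return (G : ℂ ≃ₜ ℂ) (hGT : ∀ z (k : ℤ), G (z + k * τ) = G z + k * τ)
    {z₀ : ℂ} (hz₀ : G z₀ = z₀)
    (hNW : ∀ U : Set ℂ, IsOpen U → U.Nonempty →
      ∃ x ∈ U, ∃ m : ℕ, 1 ≤ m ∧ ∃ k : ℤ, G^[m] x + k * τ ∈ U) :
    ∃ n : ℕ, 1 ≤ n ∧ ∃ z : ℂ, z.im = 0 ∧ ∃ k : ℤ, (G^[n] z).im = k * (2 * Real.pi) := by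
  by_contra! hcon
  have hpi := Real.pi_pos
  have hSymT : ∀ z (k : ℤ), G.symm (z + k * τ) = G.symm z + k * τ := fun z k => by
    apply G.injective
    rw [hGT]
    simp
  have hGTn : ∀ n : ℕ, ∀ z (k : ℤ), G^[n] (z + k * τ) = G^[n] z + k * τ := by
    intro n
    induction n with
    | zero => simp
    | succ n ih => intro z k; rw [Function.iterate_succ_apply, hGT, ih, Function.iterate_succ_apply]
  have hSymTn : ∀ n : ℕ, ∀ z (k : ℤ), G.symm^[n] (z + k * τ) = G.symm^[n] z + k * τ := by
    intro n
    induction n with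
    | zero => simp
    | succ n ih =>
      intro z k; rw [Function.iterate_succ_apply, hSymT, ih, Function.iterate_succ_apply]
  have hside : ∀ n : ℕ, 1 ≤ n → ∀ k : ℤ,
      (∀ z : ℂ, 0 ≤ z.im → 0 < (G^[n] z + k * τ).im) ∨
      (∀ z : ℂ, z.im ≤ 0 → (G^[n] z + k * τ).im < 0) := by
    intro n hn k
    refine maps_halfPlane_of_axis_displaced (A := fun z => G^[n] z + k * τ)
      (B := fun z => G.symm^[n] (z + ((-k : ℤ) : ℂ) * τ))
      ((G.continuous.iterate n).add continuous_const)
      ((G.symm.continuous.iterate n).comp (by fun_prop)) ?_ ?_ ?_ ?_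
    · intro z
      rw [(Function.LeftInverse.iterate (g := G) (f := G.symm) G.apply_symm_apply n) _]
      push_cast; ring
    · intro z
      rw [← (Function.LeftInverse.iterate (g := G.symm) (f := G) G.symm_apply_apply n) z]
      congr 1
      simp only [Function.LeftInverse.iterate (g := G.symm) (f := G) G.symm_apply_apply n z]
      push_cast; ring
    · intro z j
      rw [← hSymTn]
      congr 1; ring
    · intro z hz h0
      rw [im_add_int_mul_period] at h0
      apply hcon n hn z hz (-k)
      push_cast
      linarith
  have hfixn : ∀ n : ℕ, ∀ k : ℤ, G^[n] (z₀ + k * τ) = z₀ + k * τ := fun n k => by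
    rw [hGTn, Function.iterate_fixed hz₀]
  -- the fixed point rules out pushing towards one side past a translate
  have hbdU : ∀ n : ℕ, 1 ≤ n → ∀ z : ℂ, z.im ≤ 0 → (G^[n] z).im < 2 * Real.pi := by
    intro n hn
    rcases hside n hn (-1) with h | h
    · exfalso
      set c : ℝ := z₀.im / (2 * Real.pi) with hc
      have hc' : z₀.im = c * (2 * Real.pi) := by rw [hc]; field_simp
      have h1 := h (z₀ + ((-⌊c⌋ : ℤ) : ℂ) * τ) (by
        rw [im_add_int_mul_period, hc']
        push_cast
        nlinarith [Int.floor_le c])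
      rw [hfixn, im_add_int_mul_period, im_add_int_mul_period, hc'] at h1
      push_cast at h1
      nlinarith [Int.lt_floor_add_one c]
    · intro z hz
      have := h z hz
      rw [im_add_int_mul_period] at this
      push_cast at this
      linarith
  have hbdL : ∀ n : ℕ, 1 ≤ n → ∀ z : ℂ, 0 ≤ z.im → -(2 * Real.pi) < (G^[n] z).im := by
    intro n hn
    rcases hside n hn 1 with h | h
    · intro z hz
      have := h z hz
      rw [im_add_int_mul_period] at this
      push_cast at this
      linarith
    · exfalso
      set c : ℝ := z₀.im / (2 * Real.pi) with hc
      have hc' : z₀.im = c * (2 * Real.pi) := by rw [hc]; field_simp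
      have h1 := h (z₀ + ((-⌈c⌉ : ℤ) : ℂ) * τ) (by
        rw [im_add_int_mul_period, hc']
        push_cast
        nlinarith [Int.le_ceil c])
      rw [hfixn, im_add_int_mul_period, im_add_int_mul_period, hc'] at h1
      push_cast at h1
      nlinarith [Int.ceil_lt_add_one c]
  rcases hside 1 le_rfl 0 with h | h
  · exact not_pushes_up G.continuous hGT hNW (fun z hz => by simpa using h z hz) hbdU
  · have hiter : ∀ n : ℕ, ∀ z : ℂ, (fun w => star (G (star w)))^[n] z = star (G^[n] (star z)) := by
      intro n
      induction n with
      | zero => simp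
      | succ n ih => intro z; rw [Function.iterate_succ_apply, ih]; simp
    refine not_pushes_up (G := fun w => star (G (star w)))
      (continuous_star.comp (G.continuous.comp continuous_star)) ?_ ?_ ?_ ?_
    · intro z k
      have e : star (z + k * τ) = star z + ((-k : ℤ) : ℂ) * τ := by simp
      simp only [e, hGT]
      simp
    · intro U hU hne
      obtain ⟨x, hx, m, hm, k, hk⟩ := hNW (star ⁻¹' U) (hU.preimage continuous_star) (by
        obtain ⟨u, hu⟩ := hne
        exact ⟨star u, by simpa using hu⟩)
      refine ⟨star x, hx, m, hm, -k, ?_⟩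
      rw [hiter]
      simpa [map_ofNat] using hk
    · intro z hz
      have := h (star z) (by simpa using hz)
      simpa using this
    · intro n hn z hz
      rw [hiter]
      have := hbdL n hn (star z) (by simpa using hz)
      simp only [Complex.star_def, Complex.conj_im] at this ⊢
      linarith

/-- The punctured plane. -/
local notation "ℂˢ" => {z : ℂ // z ≠ 0}

/-- The exponential map onto the punctured plane. -/
def expPunctured (z : ℂ) : ℂˢ := ⟨Complex.exp z, z.exp_ne_zero⟩

lemma isCoveringMap_expPunctured : IsCoveringMap expPunctured := Complex.isCoveringMap_exp

lemma expPunctured_eq_iff {z w : ℂ} :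
    expPunctured z = expPunctured w ↔ ∃ k : ℤ, z = w + k * τ := by
  simp [expPunctured, Complex.exp_eq_exp_iff_exists_int]

lemma exists_expPunctured_eq (w : ℂˢ) : ∃ z, expPunctured z = w :=
  ⟨Complex.log w, Subtype.ext (Complex.exp_log w.2)⟩

lemma expPunctured_add_int_mul (z : ℂ) (k : ℤ) : expPunctured (z + k * τ) = expPunctured z :=
  expPunctured_eq_iff.2 ⟨k, rfl⟩

lemma exists_continuous_lift {h : ℂˢ → ℂˢ} (hh : Continuous h) {a b : ℂ}
    (hab : expPunctured b = h (expPunctured a)) :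
    ∃ F : ℂ → ℂ, Continuous F ∧ F a = b ∧ ∀ z, expPunctured (F z) = h (expPunctured z) := by
  obtain ⟨F, ⟨hF0, hF⟩, -⟩ := isCoveringMap_expPunctured.existsUnique_continuousMap_lifts
    (⟨fun z => h (expPunctured z), hh.comp isCoveringMap_expPunctured.continuous⟩ : C(ℂ, ℂˢ))
    a b hab
  exact ⟨F, F.continuous, hF0, fun z => congrFun hF z⟩

/-- Every homeomorphism of the punctured plane lifts to the exponential covering. -/
lemma exists_homeomorph_lift (h : ℂˢ ≃ₜ ℂˢ) :
    ∃ F : ℂ ≃ₜ ℂ, ∀ z, expPunctured (F z) = h (expPunctured z) := by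
  obtain ⟨b, hb⟩ := exists_expPunctured_eq (h (expPunctured 0))
  obtain ⟨F, hFc, hF0, hF⟩ := exists_continuous_lift h.continuous hb
  obtain ⟨K, hKc, hK0, hK⟩ := exists_continuous_lift (h := h.symm) h.symm.continuous
    (a := b) (b := 0) (by rw [hb]; simp)
  have hKF : K ∘ F = id := isCoveringMap_expPunctured.eq_of_comp_eq (hKc.comp hFc) continuous_id
    (by ext1 z; simp [hK, hF]) 0 (by simp [hF0, hK0])
  have hFK : F ∘ K = id := isCoveringMap_expPunctured.eq_of_comp_eq (hFc.comp hKc) continuous_id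
    (by ext1 z; simp [hK, hF]) b (by simp [hF0, hK0])
  exact ⟨⟨⟨F, K, congrFun hKF, congrFun hFK⟩, hFc, hKc⟩, hF⟩

/-- A lift of a self-map of the punctured plane intertwines deck translations through a degree. -/
lemma exists_degree {h : ℂˢ → ℂˢ} {F : ℂ → ℂ} (hF : Continuous F)
    (hlift : ∀ z, expPunctured (F z) = h (expPunctured z)) :
    ∃ d : ℤ, ∀ z (k : ℤ), F (z + k * τ) = F z + (k * d : ℤ) * τ := by
  obtain ⟨d, hd⟩ := expPunctured_eq_iff.1 (show expPunctured (F (0 + (1 : ℤ) * τ)) =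
    expPunctured (F 0) by rw [hlift, hlift, expPunctured_add_int_mul])
  have hone : ∀ z, F (z + τ) = F z + d * τ := by
    have := isCoveringMap_expPunctured.eq_of_comp_eq (g₁ := fun z => F (z + (1 : ℤ) * τ))
      (g₂ := fun z => F z + d * τ) (by fun_prop) (by fun_prop)
      (by ext1 z
          simp only [Function.comp_apply]
          rw [expPunctured_add_int_mul, hlift, hlift, expPunctured_add_int_mul]) 0 hd
    intro z
    simpa using congrFun this z
  refine ⟨d, fun z k => ?_⟩
  induction k with
  | zero => simp
  | succ k ih =>
    have := hone (z + k * τ)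
    push_cast at ih ⊢
    rw [show z + ((k : ℂ) + 1) * τ = z + k * τ + τ by ring, this, ih]
    ring
  | pred k ih =>
    have := hone (z + (-k - 1) * τ)
    push_cast at ih ⊢
    rw [show z + (-(k : ℂ) - 1) * τ + τ = z + -k * τ by ring, ih] at this
    linear_combination -this

/-- The square of a lift of a homeomorphism commutes with the deck translations. -/
lemma lift_sq_commutes {h : ℂˢ ≃ₜ ℂˢ} {F : ℂ ≃ₜ ℂ}
    (hF : ∀ z, expPunctured (F z) = h (expPunctured z)) (z : ℂ) (k : ℤ) :
    F (F (z + k * τ)) = F (F z) + k * τ := by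
  obtain ⟨d, hd⟩ := exists_degree F.continuous hF
  obtain ⟨e, he⟩ := exists_degree (h := h.symm) F.symm.continuous (fun z => by
    exact h.injective (by simp [← hF]))
  have hde : d * e = 1 := by
    have h1 := he (F 0) d
    have h2 := hd 0 1
    rw [one_mul] at h2
    rw [← h2] at h1
    simp only [Homeomorph.symm_apply_apply, zero_add] at h1
    have h3 : ((1 : ℤ) : ℂ) = ((d * e : ℤ) : ℂ) :=
      mul_right_cancel₀ Complex.two_pi_I_ne_zero h1
    exact_mod_cast h3.symm
  have hdd : d * d = 1 := by
    rcases Int.eq_one_or_neg_one_of_mul_eq_one hde with rfl | rfl <;> rfl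
  rw [hd, hd, mul_assoc, hdd, mul_one]

/-- The iterates of a homeomorphism, as homeomorphisms. -/
def iterateHomeomorph {X : Type*} [TopologicalSpace X] (h : X ≃ₜ X) (n : ℕ) : X ≃ₜ X where
  toFun := h^[n]
  invFun := h.symm^[n]
  left_inv := Function.LeftInverse.iterate h.symm_apply_apply n
  right_inv := Function.LeftInverse.iterate h.apply_symm_apply n
  continuous_toFun := h.continuous.iterate n
  continuous_invFun := h.symm.continuous.iterate n

/-- All positive iterates of `h` are nonwandering: every nonempty open set returns to itself. -/
def TotallyNonwandering {X : Type*} [TopologicalSpace X] (h : X → X) : Prop :=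
  ∀ N : ℕ, 1 ≤ N → ∀ U : Set X, IsOpen U → U.Nonempty →
    ∃ x ∈ U, ∃ m : ℕ, 1 ≤ m ∧ (h^[N])^[m] x ∈ U

/-- The positive real half-line in the punctured plane. -/
def posRay : Set ℂˢ := {z | ∃ r : ℝ, 0 < r ∧ (z : ℂ) = r}

lemma expPunctured_mem_posRay {z : ℂ} {k : ℤ} (hz : z.im = k * (2 * Real.pi)) :
    expPunctured z ∈ posRay := by
  refine ⟨Real.exp z.re, Real.exp_pos _, ?_⟩
  have hz' : z = (z.re : ℂ) + k * τ := by
    apply Complex.ext <;> simp [hz]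
  have := congrArg Subtype.val (expPunctured_add_int_mul (z.re : ℂ) k)
  rw [← hz'] at this
  simpa [expPunctured] using this

/-- A totally nonwandering homeomorphism of the punctured plane with a periodic point has an
iterate mapping some point of the positive ray into the positive ray. -/
theorem exists_posRay_return (h : ℂˢ ≃ₜ ℂˢ) (hNW : TotallyNonwandering h)
    {q : ℕ} (hq : 1 ≤ q) {w : ℂˢ} (hw : h^[q] w = w) :
    ∃ n : ℕ, 1 ≤ n ∧ ∃ z ∈ posRay, h^[n] z ∈ posRay := by
  obtain ⟨F, hF⟩ := exists_homeomorph_lift h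
  obtain ⟨z₀, rfl⟩ := exists_expPunctured_eq w
  have hFn : ∀ n : ℕ, ∀ z, expPunctured (F^[n] z) = h^[n] (expPunctured z) := by
    intro n
    induction n with
    | zero => simp
    | succ n ih =>
      intro z; rw [Function.iterate_succ_apply, ih, hF, Function.iterate_succ_apply]
  have hFT : ∀ n : ℕ, ∀ z (k : ℤ), F^[2 * n] (z + k * τ) = F^[2 * n] z + k * τ := by
    intro n
    induction n with
    | zero => simp
    | succ n ih =>
      intro z k
      rw [show 2 * (n + 1) = 2 * n + 1 + 1 by ring]
      simp only [Function.iterate_succ_apply]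
      rw [lift_sq_commutes hF, ih]
  obtain ⟨j, hj⟩ := expPunctured_eq_iff.1 (show expPunctured (F^[2 * q] z₀) = expPunctured z₀ by
    rw [hFn, mul_comm, Function.iterate_mul, Function.iterate_fixed hw])
  let G : ℂ ≃ₜ ℂ := (iterateHomeomorph F (2 * q)).trans (Homeomorph.addRight (-((j : ℂ) * τ)))
  have hGdef : ∀ z, G z = F^[2 * q] z + -((j : ℂ) * τ) := fun z => rfl
  have hGlift : ∀ n : ℕ, ∀ z, expPunctured (G^[n] z) = (h^[2 * q])^[n] (expPunctured z) := by
    intro n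
    induction n with
    | zero => simp
    | succ n ih =>
      intro z
      rw [Function.iterate_succ_apply, ih, Function.iterate_succ_apply, ← hFn, hGdef]
      congr 1
      have := expPunctured_add_int_mul (F^[2 * q] z) (-j)
      push_cast at this
      rw [← this]
      ring_nf
  obtain ⟨n, hn, z, hz, k, hk⟩ := exists_axis_return G (fun z k => by
      rw [hGdef, hGdef, hFT]; ring) (z₀ := z₀) (by rw [hGdef, hj]; ring) (by
      intro U hU hne
      obtain ⟨-, ⟨x, hx, rfl⟩, m, hm, y, hy, hxy⟩ := hNW (2 * q) (by omega) (expPunctured '' U)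
        (isCoveringMap_expPunctured.isLocalHomeomorph.isOpenMap _ hU) (hne.image _)
      rw [← hGlift] at hxy
      obtain ⟨k, hk⟩ := expPunctured_eq_iff.1 hxy
      exact ⟨x, hx, m, hm, k, hk ▸ hy⟩)
  refine ⟨2 * q * n, by nlinarith, expPunctured z, expPunctured_mem_posRay (k := 0) (by simpa),
    ?_⟩
  rw [Function.iterate_mul, ← hGlift]
  exact expPunctured_mem_posRay hk

/-- The filter of neighbourhoods of infinity in the punctured plane. -/
def endInfty : Filter ℂˢ := Filter.comap (fun z : ℂˢ => ‖(z : ℂ)‖) Filter.atTop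

/-- The filter of neighbourhoods of the puncture in the punctured plane. -/
def endZero : Filter ℂˢ := Filter.comap (fun z : ℂˢ => ‖(z : ℂ)‖) (𝓝 0)

lemma isCompact_closed_annulus {R : ℝ} (hR : 0 < R) :
    IsCompact {z : ℂˢ | R⁻¹ ≤ ‖(z : ℂ)‖ ∧ ‖(z : ℂ)‖ ≤ R} := by
  rw [Topology.IsEmbedding.subtypeVal.isCompact_iff]
  have himg : Subtype.val '' {z : ℂˢ | R⁻¹ ≤ ‖(z : ℂ)‖ ∧ ‖(z : ℂ)‖ ≤ R} =
      {z : ℂ | R⁻¹ ≤ ‖z‖} ∩ Metric.closedBall 0 R := by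
    ext z
    constructor
    · rintro ⟨w, hw, rfl⟩
      exact ⟨hw.1, by simpa using hw.2⟩
    · rintro ⟨h1, h2⟩
      have hz : z ≠ 0 := norm_pos_iff.1 (lt_of_lt_of_le (inv_pos.2 hR) h1)
      exact ⟨⟨z, hz⟩, ⟨h1, by simpa using h2⟩, rfl⟩
  rw [himg]
  exact (isCompact_closedBall _ _).inter_left (isClosed_le continuous_const continuous_norm)

lemma isPreconnected_norm_gt {R : ℝ} (hR : 0 < R) :
    IsPreconnected {z : ℂˢ | R < ‖(z : ℂ)‖} := by
  have himg : {z : ℂˢ | R < ‖(z : ℂ)‖} = expPunctured '' {w : ℂ | Real.log R < w.re} := by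
    ext z
    constructor
    · intro hz
      refine ⟨Complex.log z, ?_, Subtype.ext (Complex.exp_log z.2)⟩
      simpa [Complex.log_re] using Real.log_lt_log hR hz
    · rintro ⟨w, hw, rfl⟩
      simpa [expPunctured, Complex.norm_exp] using (Real.log_lt_iff_lt_exp hR).1 hw
  rw [himg]
  exact ((convex_halfSpace_re_gt _).isPreconnected).image _
    isCoveringMap_expPunctured.continuous.continuousOn

/-- A homeomorphism of the punctured plane sends the end at infinity to one of the two ends. -/
lemma tendsto_endInfty_or (h : ℂˢ ≃ₜ ℂˢ) :
    Filter.Tendsto h endInfty endInfty ∨ Filter.Tendsto h endInfty endZero := by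
  have hnorm : Continuous fun z : ℂˢ => ‖(z : ℂ)‖ := continuous_subtype_val.norm
  have hesc : ∀ R : ℝ, 1 < R → ∃ S : ℝ,
      (∀ z : ℂˢ, S < ‖(z : ℂ)‖ → R < ‖(h z : ℂ)‖) ∨
      (∀ z : ℂˢ, S < ‖(z : ℂ)‖ → ‖(h z : ℂ)‖ < R⁻¹) := by
    intro R hR
    obtain ⟨S, hS⟩ := ((isCompact_closed_annulus (by linarith : 0 < R)).image
      h.symm.continuous).exists_bound_of_continuousOn hnorm.continuousOn
    have hout : ∀ z : ℂˢ, max S 1 < ‖(z : ℂ)‖ →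
        R < ‖(h z : ℂ)‖ ∨ ‖(h z : ℂ)‖ < R⁻¹ := by
      intro z hz
      by_contra! hcon
      have := hS z ⟨h z, ⟨hcon.2, hcon.1⟩, by simp⟩
      rw [norm_norm] at this
      exact absurd (lt_of_le_of_lt (le_max_left _ _) hz) (not_lt.2 this)
    refine ⟨max S 1, ?_⟩
    by_contra! hcon
    obtain ⟨⟨u, hu, hu'⟩, ⟨v, hv, hv'⟩⟩ := hcon
    have hR1 : R⁻¹ < 1 := inv_lt_one_of_one_lt₀ hR
    have hu1 : ‖(h u : ℂ)‖ ≤ 1 := by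
      rcases hout u hu with h1 | h1 <;> linarith
    have hv1 : 1 ≤ ‖(h v : ℂ)‖ := by
      rcases hout v hv with h1 | h1 <;> linarith
    obtain ⟨w, hw, hw1⟩ := (isPreconnected_norm_gt
      (lt_of_lt_of_le one_pos (le_max_right S 1))).intermediate_value hu hv
      (hnorm.comp h.continuous).continuousOn ⟨hu1, hv1⟩
    simp only [Function.comp_apply] at hw1
    rcases hout w hw with h1 | h1 <;> linarith
  have hev : ∀ S : ℝ, ∀ᶠ z : ℂˢ in endInfty, S < ‖(z : ℂ)‖ := fun S =>
    Filter.tendsto_comap.eventually (Filter.eventually_gt_atTop S)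
  by_cases hall : ∀ R : ℝ, 1 < R → ∃ S : ℝ, ∀ z : ℂˢ, S < ‖(z : ℂ)‖ → R < ‖(h z : ℂ)‖
  · left
    rw [endInfty, Filter.tendsto_comap_iff, Filter.tendsto_atTop]
    intro b
    obtain ⟨S, hS⟩ := hall (max b 2) (lt_of_lt_of_le one_lt_two (le_max_right _ _))
    filter_upwards [hev S] with z hz
    exact (le_max_left b 2).trans (hS z hz).le
  · right
    push Not at hall
    obtain ⟨R₀, hR₀, hbad⟩ := hall
    rw [endZero, Filter.tendsto_comap_iff, Metric.tendsto_nhds]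
    intro ε hε
    obtain ⟨S, hS | hS⟩ := hesc (max R₀ ε⁻¹) (lt_of_lt_of_le hR₀ (le_max_left _ _))
    · exfalso
      obtain ⟨z, hz, hz'⟩ := hbad S
      have := lt_of_le_of_lt (le_max_left _ _) (hS z hz)
      linarith
    · filter_upwards [hev S] with z hz
      have h1 := hS z hz
      have h2 : (max R₀ ε⁻¹)⁻¹ ≤ ε := inv_le_of_inv_le₀ hε (le_max_right _ _)
      simpa using lt_of_lt_of_le h1 h2

/-- Inversion of the punctured plane. -/
def invPunctured : ℂˢ ≃ₜ ℂˢ where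
  toFun z := ⟨(z : ℂ)⁻¹, inv_ne_zero z.2⟩
  invFun z := ⟨(z : ℂ)⁻¹, inv_ne_zero z.2⟩
  left_inv z := by simp
  right_inv z := by simp
  continuous_toFun := (continuous_subtype_val.inv₀ fun z => z.2).subtype_mk _
  continuous_invFun := (continuous_subtype_val.inv₀ fun z => z.2).subtype_mk _

lemma tendsto_invPunctured_endZero : Filter.Tendsto invPunctured endZero endInfty := by
  rw [endInfty, Filter.tendsto_comap_iff]
  have h1 : Filter.Tendsto (fun z : ℂˢ => ‖(z : ℂ)‖) endZero (𝓝[>] 0) :=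
    tendsto_nhdsWithin_iff.2 ⟨Filter.tendsto_comap,
      Filter.Eventually.of_forall fun z => norm_pos_iff.2 z.2⟩
  refine (tendsto_inv_nhdsGT_zero.comp h1).congr fun z => ?_
  simp [invPunctured]

instance neBot_endInfty : endInfty.NeBot := by
  rw [endInfty, Filter.comap_neBot_iff_frequently]
  refine (Filter.eventually_gt_atTop (0 : ℝ)).frequently.mono fun r hr => ?_
  exact ⟨⟨(r : ℂ), by exact_mod_cast hr.ne'⟩, by simp [abs_of_pos hr]⟩

lemma disjoint_endInfty_endZero : Disjoint endInfty endZero :=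
  Filter.disjoint_comap (disjoint_nhds_atTop 0).symm

/-- The square of a homeomorphism of the punctured plane fixes the end at infinity. -/
lemma tendsto_sq_endInfty (h : ℂˢ ≃ₜ ℂˢ) : Filter.Tendsto (h ∘ h) endInfty endInfty := by
  rcases tendsto_endInfty_or h with hI | hI
  · exact hI.comp hI
  have hback : ∀ l : Filter ℂˢ, Filter.Tendsto (invPunctured.trans h) endInfty l →
      Filter.Tendsto h endZero l := fun l hl =>
    (hl.comp tendsto_invPunctured_endZero).congr fun z => by
      simp [invPunctured]
  rcases tendsto_endInfty_or (invPunctured.trans h) with hZ | hZ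
  · exact (hback _ hZ).comp hI
  · exfalso
    have hid : Filter.Tendsto (h ∘ h.symm) endInfty endZero := by
      rcases tendsto_endInfty_or h.symm with hs | hs
      · exact hI.comp hs
      · exact (hback _ hZ).comp hs
    have hidZero : Filter.Tendsto (id : ℂˢ → ℂˢ) endInfty endZero :=
      hid.congr fun z => by simp
    exact (Filter.tendsto_id.not_tendsto disjoint_endInfty_endZero) hidZero

/-- The bijection `z ↦ z / (p - z)` of the punctured plane, completed by `p ↦ -1`; it is the
restriction of a Möbius transformation exchanging the roles of `p` and infinity. -/
def moebiusEquiv (p : ℂˢ) : ℂˢ ≃ ℂˢ where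
  toFun z := if h : (z : ℂ) = p then ⟨-1, by simp⟩ else
    ⟨z / (p - z), div_ne_zero z.2 (sub_ne_zero.2 (Ne.symm h))⟩
  invFun w := if h : (w : ℂ) = -1 then p else
    ⟨p * w / (1 + w), div_ne_zero (mul_ne_zero p.2 w.2)
      fun h' => h (by linear_combination h')⟩
  left_inv z := by
    by_cases h : (z : ℂ) = p
    · simp [h, Subtype.ext_iff]
    · have h1 : (p : ℂ) - z ≠ 0 := sub_ne_zero.2 (Ne.symm h)
      have h2 : (z : ℂ) / (p - z) ≠ -1 := by
        rw [ne_eq, div_eq_iff h1]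
        intro h3
        exact p.2 (by linear_combination h3)
      have h4 : 1 + (z : ℂ) / (p - z) = p / (p - z) := by field_simp; ring
      have h5 := p.2
      simp only [h, h2, dite_false]
      ext
      simp only [h4]
      field_simp
  right_inv w := by
    by_cases h : (w : ℂ) = -1
    · simp [h, Subtype.ext_iff]
    · have h1 : 1 + (w : ℂ) ≠ 0 := fun h' => h (by linear_combination h')
      have h5 := p.2
      have h2 : (p : ℂ) * w / (1 + w) ≠ p := by
        rw [ne_eq, div_eq_iff h1]
        intro h3
        exact h5 (by linear_combination -h3)
      have h4 : (p : ℂ) - p * w / (1 + w) = p / (1 + w) := by field_simp; ring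
      simp only [h, h2, dite_false]
      ext
      simp only [h4]
      field_simp

lemma moebiusEquiv_apply {p z : ℂˢ} (h : z ≠ p) :
    (moebiusEquiv p z : ℂ) = z / (p - z) := by
  have h' : (z : ℂ) ≠ p := fun e => h (Subtype.ext e)
  simp [moebiusEquiv, h']

lemma moebiusEquiv_symm_apply {p w : ℂˢ} (h : (w : ℂ) ≠ -1) :
    ((moebiusEquiv p).symm w : ℂ) = p * w / (1 + w) := by
  simp [moebiusEquiv, h]

lemma moebiusEquiv_self (p : ℂˢ) : (moebiusEquiv p p : ℂ) = -1 := by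
  simp [moebiusEquiv]

lemma continuousAt_moebiusEquiv {p z : ℂˢ} (h : z ≠ p) : ContinuousAt (moebiusEquiv p) z := by
  refine Topology.IsInducing.subtypeVal.continuousAt_iff.2 ?_
  have hz : (p : ℂ) - z ≠ 0 := sub_ne_zero.2 fun h' => h (Subtype.ext h'.symm)
  refine ContinuousAt.congr (f := fun z : ℂˢ => (z : ℂ) / (p - z)) ?_ ?_
  · exact continuous_subtype_val.continuousAt.div
      (continuous_const.sub continuous_subtype_val).continuousAt hz
  · filter_upwards [isOpen_ne.mem_nhds h] with y hy
    exact (moebiusEquiv_apply hy).symm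

lemma continuousAt_moebiusEquiv_symm {p w : ℂˢ} (h : (w : ℂ) ≠ -1) :
    ContinuousAt (moebiusEquiv p).symm w := by
  refine Topology.IsInducing.subtypeVal.continuousAt_iff.2 ?_
  have hw : 1 + (w : ℂ) ≠ 0 := fun h' => h (by linear_combination h')
  refine ContinuousAt.congr (f := fun w : ℂˢ => (p : ℂ) * w / (1 + w)) ?_ ?_
  · exact (continuous_const.mul continuous_subtype_val).continuousAt.div
      (continuous_const.add continuous_subtype_val).continuousAt hw
  · filter_upwards [(isOpen_ne.preimage continuous_subtype_val).mem_nhds h] with y hy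
    exact (moebiusEquiv_symm_apply hy).symm

lemma tendsto_moebiusEquiv_endInfty (p : ℂˢ) :
    Filter.Tendsto (moebiusEquiv p) endInfty (𝓝 (moebiusEquiv p p)) := by
  rw [tendsto_subtype_rng, moebiusEquiv_self]
  have hcob : Filter.Tendsto (fun z : ℂˢ => (z : ℂ)) endInfty (Bornology.cobounded ℂ) :=
    tendsto_norm_atTop_iff_cobounded.1 Filter.tendsto_comap
  have hinv : Filter.Tendsto (fun z : ℂˢ => ((z : ℂ))⁻¹) endInfty (𝓝 0) :=
    Filter.tendsto_inv₀_cobounded.comp hcob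
  have hlim : Filter.Tendsto (fun z : ℂˢ => ((p : ℂ) * (z : ℂ)⁻¹ - 1)⁻¹) endInfty (𝓝 (-1)) := by
    have := ((hinv.const_mul (p : ℂ)).sub_const 1).inv₀ (by simp)
    simpa using this
  refine hlim.congr' ?_
  have hev : ∀ᶠ z : ℂˢ in endInfty, ‖(p : ℂ)‖ < ‖(z : ℂ)‖ :=
    Filter.tendsto_comap.eventually (Filter.eventually_gt_atTop _)
  filter_upwards [hev] with z hz
  have hzp : z ≠ p := fun h => by simp [h] at hz
  rw [moebiusEquiv_apply hzp]
  have hz0 := z.2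
  rw [show (p : ℂ) * (z : ℂ)⁻¹ - 1 = (p - z) / z by field_simp, inv_div]

lemma tendsto_moebiusEquiv_symm (p : ℂˢ) :
    Filter.Tendsto (moebiusEquiv p).symm (𝓝[≠] (moebiusEquiv p p)) endInfty := by
  rw [endInfty, Filter.tendsto_comap_iff]
  have hne : ∀ᶠ w : ℂˢ in 𝓝[≠] (moebiusEquiv p p), (w : ℂ) ≠ -1 := by
    filter_upwards [self_mem_nhdsWithin] with w hw h
    exact hw (Subtype.ext (by rw [h, moebiusEquiv_self]))
  have hval : Filter.Tendsto (fun w : ℂˢ => (w : ℂ)) (𝓝[≠] (moebiusEquiv p p)) (𝓝 (-1)) := by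
    rw [← moebiusEquiv_self p]
    exact continuous_subtype_val.continuousAt.mono_left nhdsWithin_le_nhds
  have hden : Filter.Tendsto (fun w : ℂˢ => ‖1 + (w : ℂ)‖) (𝓝[≠] (moebiusEquiv p p))
      (𝓝[>] 0) := by
    refine tendsto_nhdsWithin_iff.2 ⟨?_, ?_⟩
    · simpa using (hval.const_add 1).norm
    · filter_upwards [hne] with w hw
      exact norm_pos_iff.2 fun h' => hw (by linear_combination h')
  have hnum : Filter.Tendsto (fun w : ℂˢ => ‖(p : ℂ) * w‖) (𝓝[≠] (moebiusEquiv p p))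
      (𝓝 ‖(p : ℂ)‖) := by
    simpa using (hval.const_mul (p : ℂ)).norm
  refine (hnum.pos_mul_atTop (norm_pos_iff.2 p.2)
    (tendsto_inv_nhdsGT_zero.comp hden)).congr' ?_
  filter_upwards [hne] with w hw
  simp only [Function.comp_apply]
  rw [moebiusEquiv_symm_apply hw, norm_div, div_eq_mul_inv]

lemma continuous_moebius_conj {p : ℂˢ} (g : ℂˢ ≃ₜ ℂˢ) (hp : g p = p)
    (hg : Filter.Tendsto g endInfty endInfty) :
    Continuous ((moebiusEquiv p).symm.trans (g.toEquiv.trans (moebiusEquiv p))) := by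
  rw [continuous_iff_continuousAt]
  intro w
  have hdef : ⇑((moebiusEquiv p).symm.trans (g.toEquiv.trans (moebiusEquiv p))) =
      moebiusEquiv p ∘ g ∘ (moebiusEquiv p).symm := rfl
  by_cases hw : w = moebiusEquiv p p
  · subst hw
    rw [continuousAt_iff_punctured_nhds, hdef]
    simp only [Function.comp_apply, Equiv.symm_apply_apply, hp]
    exact (tendsto_moebiusEquiv_endInfty p).comp (hg.comp (tendsto_moebiusEquiv_symm p))
  · have hw' : (w : ℂ) ≠ -1 := fun h => hw (Subtype.ext (by rw [h, moebiusEquiv_self]))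
    rw [hdef]
    refine ContinuousAt.comp (continuousAt_moebiusEquiv ?_)
      (g.continuous.continuousAt.comp (continuousAt_moebiusEquiv_symm hw'))
    intro h
    exact hw ((Equiv.symm_apply_eq _).1 (g.injective (h.trans hp.symm)))

/-- The homeomorphism of the punctured plane obtained from one fixing `p` and infinity by
exchanging the roles of `p` and infinity. -/
def moebiusConj {p : ℂˢ} (g : ℂˢ ≃ₜ ℂˢ) (hp : g p = p)
    (hg : Filter.Tendsto g endInfty endInfty) (hg' : Filter.Tendsto g.symm endInfty endInfty) :
    ℂˢ ≃ₜ ℂˢ where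
  toEquiv := (moebiusEquiv p).symm.trans (g.toEquiv.trans (moebiusEquiv p))
  continuous_toFun := continuous_moebius_conj g hp hg
  continuous_invFun := continuous_moebius_conj g.symm (by rw [g.symm_apply_eq, hp]) hg'

lemma diff_singleton_nonempty {U : Set ℂˢ} (hU : IsOpen U) (hne : U.Nonempty) (a : ℂˢ) :
    (U \ {a}).Nonempty := by
  by_contra hcon
  rw [Set.not_nonempty_iff_eq_empty, Set.sdiff_eq_empty] at hcon
  have hUa : U = {a} := (Set.Nonempty.subset_singleton_iff hne).1 hcon
  have hopen := (isOpen_ne (x := (0 : ℂ))).isOpenMap_subtype_val U hU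
  rw [hUa, Set.image_singleton] at hopen
  exact not_isOpen_singleton _ hopen

/-- A totally nonwandering homeomorphism of the punctured plane fixing infinity and a positive real
`p` has an iterate mapping some point of the interval `(0, p)` into the positive ray. -/
theorem exists_posRay_return_lt (g : ℂˢ ≃ₜ ℂˢ) (hNW : TotallyNonwandering g)
    (hg : Filter.Tendsto g endInfty endInfty) (hg' : Filter.Tendsto g.symm endInfty endInfty)
    {p : ℂˢ} (hpos : p ∈ posRay) (hp : g p = p) :
    ∃ n : ℕ, 1 ≤ n ∧ ∃ z ∈ posRay, g^[n] z ∈ posRay ∧ (z : ℂ).re < (p : ℂ).re := by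
  have hiter : ∀ n : ℕ, ∀ w, (moebiusConj g hp hg hg')^[n] w =
      moebiusEquiv p (g^[n] ((moebiusEquiv p).symm w)) := by
    intro n
    induction n with
    | zero => simp
    | succ n ih =>
      intro w
      rw [Function.iterate_succ_apply, ih, Function.iterate_succ_apply]
      have hone : moebiusConj g hp hg hg' w = moebiusEquiv p (g ((moebiusEquiv p).symm w)) := rfl
      rw [hone, Equiv.symm_apply_apply]
  have hiter' : ∀ N n : ℕ, ∀ w, ((moebiusConj g hp hg hg')^[N])^[n] w =
      moebiusEquiv p ((g^[N])^[n] ((moebiusEquiv p).symm w)) := by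
    intro N n w
    rw [← Function.iterate_mul, hiter, ← Function.iterate_mul]
  obtain ⟨r, hr, hpr⟩ := hpos
  obtain ⟨n, hn, w, ⟨s, hs, hws⟩, ⟨t, ht, hwt⟩⟩ :=
    exists_posRay_return (moebiusConj g hp hg hg') (by
      intro N hN U hU hne
      obtain ⟨u, hu, hu'⟩ := diff_singleton_nonempty hU hne (moebiusEquiv p p)
      have hopen : IsOpen (moebiusEquiv p ⁻¹' (U \ {moebiusEquiv p p})) := by
        rw [isOpen_iff_mem_nhds]
        intro z hz
        refine (continuousAt_moebiusEquiv fun h => hz.2 (by rw [h]; rfl)).preimage_mem_nhds ?_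
        exact (hU.sdiff isClosed_singleton).mem_nhds hz
      obtain ⟨x, hx, m, hm, hxm⟩ := hNW N hN _ hopen
        ⟨(moebiusEquiv p).symm u, by simpa using ⟨hu, hu'⟩⟩
      refine ⟨moebiusEquiv p x, hx.1, m, hm, ?_⟩
      rw [hiter', Equiv.symm_apply_apply]
      exact hxm.1)
    (le_refl 1) (w := moebiusEquiv p p) (by rw [hiter]; simp [hp])
  rw [hiter] at hwt
  have hpull : ∀ w : ℂˢ, ∀ s : ℝ, 0 < s → (w : ℂ) = s →
      ((moebiusEquiv p).symm w : ℂ) = ((r * s / (1 + s) : ℝ) : ℂ) := by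
    intro w s hs hws
    rw [moebiusEquiv_symm_apply, hws, hpr]
    · push_cast; rfl
    · rw [hws]
      intro h
      have h1 : s = -1 := by exact_mod_cast h
      linarith
  refine ⟨n, hn, (moebiusEquiv p).symm w, ⟨_, by positivity, hpull w s hs hws⟩,
    ⟨r * t / (1 + t), by positivity, ?_⟩, ?_⟩
  · rw [← hpull _ t ht hwt, Equiv.symm_apply_apply]
  · rw [hpull w s hs hws, hpr, Complex.ofReal_re, Complex.ofReal_re, div_lt_iff₀ (by positivity)]
    nlinarith

/-- A totally nonwandering homeomorphism of the punctured plane with a periodic point, for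
which returns to the positive ray force periodicity, has infinitely many periodic points there. -/
theorem infinite_periodic_posRay (h : ℂˢ ≃ₜ ℂˢ) (hNW : TotallyNonwandering h)
    (hret : ∀ n : ℕ, ∀ z ∈ posRay, h^[n] z ∈ posRay → h^[2 * n] z = z)
    {q : ℕ} (hq : 1 ≤ q) {w : ℂˢ} (hw : h^[q] w = w) :
    {z : ℂˢ | z ∈ posRay ∧ ∃ k : ℕ, 1 ≤ k ∧ h^[k] z = z}.Infinite := by
  intro hfin
  obtain ⟨n, hn, z, hz, hzn⟩ := exists_posRay_return h hNW hq hw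
  obtain ⟨p, ⟨hp, N, hN, hpN⟩, hmin⟩ := Set.exists_min_image _ (fun z : ℂˢ => (z : ℂ).re) hfin
    ⟨z, hz, 2 * n, by omega, hret n z hz hzn⟩
  have hend : ∀ k : ℂˢ ≃ₜ ℂˢ, Filter.Tendsto k^[2 * N] endInfty endInfty := fun k => by
    rw [Function.iterate_mul]
    exact (tendsto_sq_endInfty k).iterate N
  obtain ⟨m, hm, x, hx, hxm, hlt⟩ := exists_posRay_return_lt (iterateHomeomorph h (2 * N))
    (by
      intro M hM U hU hne
      obtain ⟨x, hx, m, hm, hxm⟩ := hNW (2 * N * M) (by nlinarith) U hU hne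
      exact ⟨x, hx, m, hm, by rwa [Function.iterate_mul] at hxm⟩)
    (hend h) (hend h.symm) hp (by
      change h^[2 * N] p = p
      rw [mul_comm, Function.iterate_mul, Function.iterate_fixed hpN])
  have hxm' : h^[2 * N * m] x ∈ posRay := by rwa [Function.iterate_mul]
  have := hmin x ⟨hx, 2 * (2 * N * m), by nlinarith [Nat.mul_le_mul hN hm],
    hret _ x hx hxm'⟩
  exact absurd hlt (not_lt.2 this)

/-- The point `y + i x` of the complex plane attached to `(x, y)`. -/
def swapComplex (p : ℝ × ℝ) : ℂ := ⟨p.2, p.1⟩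

lemma norm_swapComplex (p : ℝ × ℝ) : ‖swapComplex p‖ = enorm2 p := by
  rw [Complex.norm_eq_sqrt_sq_add_sq, enorm2, add_comm]
  rfl

lemma continuous_swapComplex : Continuous swapComplex :=
  Complex.equivRealProdCLM.symm.continuous.comp continuous_swap

lemma swapComplex_smul (c : ℝ) (p : ℝ × ℝ) : swapComplex (c • p) = c • swapComplex p := by
  apply Complex.ext <;> simp [swapComplex]

lemma continuous_enorm2 : Continuous enorm2 := by
  unfold enorm2
  fun_prop

/-- The ratio of the radii under the radial stretching of the annulus onto the punctured plane. -/
def stretchRatio (r : ℝ) : ℝ := (r - 1) / ((2 - r) * r)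

/-- The ratio of the radii under the radial contraction of the punctured plane to the annulus. -/
def contractRatio (r : ℝ) : ℝ := (1 + 2 * r) / ((1 + r) * r)

lemma stretchRatio_pos {r : ℝ} (h1 : 1 < r) (h2 : r < 2) : 0 < stretchRatio r :=
  div_pos (by linarith) (mul_pos (by linarith) (by linarith))

lemma contractRatio_pos {r : ℝ} (hr : 0 < r) : 0 < contractRatio r := by
  unfold contractRatio
  positivity

lemma contractRatio_mul_stretchRatio {r : ℝ} (h1 : 1 < r) (h2 : r < 2) :
    contractRatio (stretchRatio r * r) * stretchRatio r = 1 := by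
  have h3 : 2 - r ≠ 0 := by linarith
  have h4 : r ≠ 0 := by linarith
  have h5 : r - 1 ≠ 0 := by linarith
  have h6 : stretchRatio r * r = (r - 1) / (2 - r) := by unfold stretchRatio; field_simp
  have h7 : 1 + 2 * ((r - 1) / (2 - r)) = r / (2 - r) := by field_simp; ring
  have h8 : 1 + (r - 1) / (2 - r) = 1 / (2 - r) := by field_simp; ring
  rw [h6, contractRatio, h7, h8, stretchRatio]
  field_simp

lemma contractRatio_mul_self {r : ℝ} (hr : 0 < r) :
    contractRatio r * r = (1 + 2 * r) / (1 + r) := by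
  unfold contractRatio
  field_simp

lemma stretchRatio_mul_contractRatio {r : ℝ} (hr : 0 < r) :
    stretchRatio (contractRatio r * r) * contractRatio r = 1 := by
  have h1 : (1 + 2 * r) / (1 + r) - 1 = r / (1 + r) := by field_simp; ring
  have h2 : 2 - (1 + 2 * r) / (1 + r) = 1 / (1 + r) := by field_simp; ring
  rw [contractRatio_mul_self hr, stretchRatio, h1, h2, contractRatio]
  field_simp

lemma enorm2_contract {w : ℂ} (hw : 0 < ‖w‖) :
    enorm2 (contractRatio ‖w‖ • (w.im, w.re)) = contractRatio ‖w‖ * ‖w‖ := by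
  rw [← norm_swapComplex, swapComplex_smul, norm_smul,
    Real.norm_of_nonneg (contractRatio_pos hw).le]
  rfl

/-- A radial homeomorphism from the open annulus onto the punctured plane, taking the upper half
of the axis `x = 0` to the positive ray. -/
def annulusHomeomorph : annulusInt ≃ₜ ℂˢ where
  toFun z := ⟨stretchRatio (enorm2 z) • swapComplex z,
    smul_ne_zero (stretchRatio_pos z.2.1 z.2.2).ne'
      (norm_pos_iff.1 (by rw [norm_swapComplex]; linarith [z.2.1]))⟩
  invFun w := ⟨contractRatio ‖(w : ℂ)‖ • ((w : ℂ).im, (w : ℂ).re), by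
    have hw : 0 < ‖(w : ℂ)‖ := norm_pos_iff.2 w.2
    unfold annulusInt
    rw [mem_ofPred_eq, enorm2_contract hw, contractRatio_mul_self hw, lt_div_iff₀ (by positivity),
      div_lt_iff₀ (by positivity)]
    constructor <;> linarith⟩
  left_inv z := by
    obtain ⟨h1, h2⟩ := z.2
    have hn : ‖stretchRatio (enorm2 z) • swapComplex z‖ =
        stretchRatio (enorm2 z) * enorm2 z := by
      rw [norm_smul, norm_swapComplex, Real.norm_of_nonneg (stretchRatio_pos h1 h2).le]
    apply Subtype.ext
    simp only [hn]
    have hpair : ((stretchRatio (enorm2 z) • swapComplex z).im,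
        (stretchRatio (enorm2 z) • swapComplex z).re) =
        stretchRatio (enorm2 z) • (z : ℝ × ℝ) := by
      apply Prod.ext <;> simp [swapComplex]
    rw [hpair, smul_smul, contractRatio_mul_stretchRatio h1 h2, one_smul]
  right_inv w := by
    have hw : 0 < ‖(w : ℂ)‖ := norm_pos_iff.2 w.2
    apply Subtype.ext
    simp only [enorm2_contract hw, swapComplex_smul]
    rw [smul_smul, stretchRatio_mul_contractRatio hw, one_smul]
    rfl
  continuous_toFun := by
    have hc : Continuous fun z : annulusInt => enorm2 z :=
      continuous_enorm2.comp continuous_subtype_val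
    have hr : Continuous fun z : annulusInt => stretchRatio (enorm2 z) := by
      refine (hc.sub continuous_const).div ((continuous_const.sub hc).mul hc) fun z => ?_
      obtain ⟨h1, h2⟩ := z.2
      exact (mul_pos (by linarith) (by linarith)).ne'
    exact (hr.smul (continuous_swapComplex.comp continuous_subtype_val)).subtype_mk _
  continuous_invFun := by
    have hc : Continuous fun w : ℂˢ => ‖(w : ℂ)‖ := continuous_subtype_val.norm
    have hr : Continuous fun w : ℂˢ => contractRatio ‖(w : ℂ)‖ := by
      refine (continuous_const.add (continuous_const.mul hc)).div
        ((continuous_const.add hc).mul hc) fun w => ?_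
      have hw : 0 < ‖(w : ℂ)‖ := norm_pos_iff.2 w.2
      positivity
    exact (hr.smul ((Complex.continuous_im.comp continuous_subtype_val).prodMk
      (Complex.continuous_re.comp continuous_subtype_val))).subtype_mk _

lemma isOpen_annulusInt : IsOpen annulusInt :=
  (isOpen_lt continuous_const continuous_enorm2).inter
    (isOpen_lt continuous_enorm2 continuous_const)

/-- Area preserving self-maps of the open annulus are totally nonwandering. -/
lemma totallyNonwandering_of_measurePreserving {f : annulusInt → annulusInt}
    (hf : MeasurePreserving f
      ((volume : Measure (ℝ × ℝ)).comap (Subtype.val : annulusInt → ℝ × ℝ))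
      ((volume : Measure (ℝ × ℝ)).comap (Subtype.val : annulusInt → ℝ × ℝ))) :
    TotallyNonwandering f := by
  have hemb : MeasurableEmbedding (Subtype.val : annulusInt → ℝ × ℝ) :=
    MeasurableEmbedding.subtype_coe isOpen_annulusInt.measurableSet
  have hfin : IsFiniteMeasure
      ((volume : Measure (ℝ × ℝ)).comap (Subtype.val : annulusInt → ℝ × ℝ)) := by
    refine ⟨?_⟩
    rw [hemb.comap_apply, image_univ, Subtype.range_coe]
    refine lt_of_le_of_lt (measure_mono fun p hp => ?_)
      (measure_closedBall_lt_top (x := (0 : ℝ × ℝ)) (r := 2))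
    have h2 : ‖swapComplex p‖ < 2 := by rw [norm_swapComplex]; exact hp.2
    rw [mem_closedBall_zero_iff, Prod.norm_def, max_le_iff]
    exact ⟨(Complex.abs_im_le_norm (swapComplex p)).trans h2.le,
      (Complex.abs_re_le_norm (swapComplex p)).trans h2.le⟩
  intro N hN U hU hne
  obtain ⟨x, hx, m, hm, hxm⟩ := (hf.iterate N).conservative.exists_mem_iterate_mem
    hU.measurableSet.nullMeasurableSet (by
      rw [hemb.comap_apply]
      exact ((isOpen_annulusInt.isOpenMap_subtype_val U hU).measure_pos _ (hne.image _)).ne')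
  exact ⟨x, hx, m, Nat.one_le_iff_ne_zero.2 hm, hxm⟩

lemma IAo_eq_self_of_mem_posRay {z : annulusInt} (hz : annulusHomeomorph z ∈ posRay) :
    IAo z = z := by
  obtain ⟨r, -, hr⟩ := hz
  have him : stretchRatio (enorm2 z) * (z : ℝ × ℝ).1 = 0 := by
    have := congrArg Complex.im hr
    rw [Complex.ofReal_im] at this
    rw [← this]
    exact (Complex.smul_im (stretchRatio (enorm2 z)) (swapComplex z)).symm
  have hx : (z : ℝ × ℝ).1 = 0 := (mul_eq_zero.1 him).resolve_left (stretchRatio_pos z.2.1 z.2.2).ne'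
  apply Subtype.ext
  apply Prod.ext <;> simp [IAo, refl2, hx]

/-- A reversible map returning from a symmetric point to a symmetric point is periodic there. -/
lemma iterate_two_mul_of_reversible {f : annulusInt ≃ₜ annulusInt}
    (hrev : ∀ z : annulusInt, f (IAo z) = IAo (f.symm z)) {n : ℕ} {z : annulusInt}
    (hz : IAo z = z) (hzn : IAo (f^[n] z) = f^[n] z) : f^[2 * n] z = z := by
  have hiter : ∀ n : ℕ, ∀ z, f^[n] (IAo z) = IAo (f.symm^[n] z) := by
    intro n
    induction n with
    | zero => simp
    | succ n ih =>
      intro z; rw [Function.iterate_succ_apply, hrev, ih, Function.iterate_succ_apply]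
  have hII : ∀ z, IAo (IAo z) = z := fun z => by
    apply Subtype.ext
    simp [IAo, refl2]
  have hsymm : f.symm^[n] z = f^[n] z := by
    rw [← hzn, ← hII (f.symm^[n] z), ← hiter, hz]
  rw [two_mul, Function.iterate_add_apply, ← hsymm]
  exact Function.LeftInverse.iterate (g := f) (f := f.symm) f.apply_symm_apply n z

/-- **Franks-like theorem for reversible maps on the open annulus.**
Every area preserving reversible homeomorphism of the open annulus is either
periodic point free or has infinitely many symmetric periodic points. -/
theorem franks_like_dichotomy_open_annulus
    (f : annulusInt ≃ₜ annulusInt)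
    (hrev : ∀ z : annulusInt, f (IAo z) = IAo (f.symm z))
    (harea : MeasurePreserving f
      ((volume : Measure (ℝ × ℝ)).comap (Subtype.val : annulusInt → ℝ × ℝ))
      ((volume : Measure (ℝ × ℝ)).comap (Subtype.val : annulusInt → ℝ × ℝ))) :
    (¬ ∃ (z : annulusInt) (k : ℕ), 1 ≤ k ∧ (⇑f)^[k] z = z) ∨
    {z : annulusInt |
        (∃ k : ℕ, 1 ≤ k ∧ (⇑f)^[k] z = z) ∧
        (∃ l : ℕ, 1 ≤ l ∧ (⇑f)^[l] z = IAo z)}.Infinite := by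
  rw [or_iff_not_imp_left, not_not]
  rintro ⟨w, q, hq, hw⟩
  set φ := annulusHomeomorph with hφ
  let h : ℂˢ ≃ₜ ℂˢ := φ.symm.trans (f.trans φ)
  have hiter : ∀ n : ℕ, ∀ z, h^[n] z = φ (f^[n] (φ.symm z)) := by
    intro n
    induction n with
    | zero => simp
    | succ n ih =>
      intro z
      rw [Function.iterate_succ_apply, ih, Function.iterate_succ_apply]
      simp [h]
  have hNW : TotallyNonwandering h := by
    intro N hN U hU hne
    obtain ⟨u, hu⟩ := hne
    obtain ⟨x, hx, m, hm, hxm⟩ := totallyNonwandering_of_measurePreserving harea N hN (φ ⁻¹' U)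
      (hU.preimage φ.continuous) ⟨φ.symm u, by simpa using hu⟩
    refine ⟨φ x, hx, m, hm, ?_⟩
    rw [← Function.iterate_mul, hiter, φ.symm_apply_apply, Function.iterate_mul]
    exact hxm
  have hfix : ∀ z ∈ posRay, IAo (φ.symm z) = φ.symm z := fun z hz =>
    IAo_eq_self_of_mem_posRay (by rwa [← hφ, φ.apply_symm_apply])
  have hinf := infinite_periodic_posRay h hNW (fun n z hz hzn => by
    rw [hiter] at hzn ⊢
    rw [iterate_two_mul_of_reversible hrev (hfix z hz) (by simpa using hfix _ hzn),
      φ.apply_symm_apply]) hq (w := φ w) (by rw [hiter, φ.symm_apply_apply, hw])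
  refine (hinf.image φ.symm.injective.injOn).mono ?_
  rintro - ⟨z, ⟨hz, k, hk, hzk⟩, rfl⟩
  have hper : f^[k] (φ.symm z) = φ.symm z := by
    rw [hiter] at hzk
    exact φ.injective (by rw [hzk, φ.apply_symm_apply])
  exact ⟨⟨k, hk, hper⟩, k, hk, by rw [hper, hfix z hz]⟩
end
end
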